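/- For every positive integer m, every weak Jacobi form φ of weight 1 and index m with optimal growth (i.e. C_φ(Δ,ℓ) = 0 for all Δ < −1) vanishes identically. -/

import Mathlib

noncomputable section

open Complex Filter Topology MeasureTheory
open scoped Classical

/-- `ee x = e^{2πix}`. -/
def ee (x : ℂ) : ℂ := Complex.exp (2 * (Real.pi : ℂ) * Complex.I * x)

/-- The index-`m` elliptic transformation law on `ℍ × ℂ`. -/
def EllipticLaw (m : ℕ) (φ : ℂ → ℂ → ℂ) : Prop :=
  ∀ τ : ℂ, 0 < τ.im → ∀ z : ℂ, ∀ lam mu : ℤ,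
    φ τ (z + (lam : ℂ) * τ + (mu : ℂ)) =
      ee (-(m : ℂ) * ((lam : ℂ) ^ 2 * τ + 2 * (lam : ℂ) * z)) * φ τ z

/-- The weight-`k` index-`m` modular transformation law on `ℍ × ℂ`. -/
def ModularLaw (k : ℤ) (m : ℕ) (φ : ℂ → ℂ → ℂ) : Prop :=
  ∀ τ : ℂ, 0 < τ.im → ∀ z : ℂ, ∀ a b c d : ℤ, a * d - b * c = 1 →
    φ (((a : ℂ) * τ + (b : ℂ)) / ((c : ℂ) * τ + (d : ℂ))) (z / ((c : ℂ) * τ + (d : ℂ))) =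
      ((c : ℂ) * τ + (d : ℂ)) ^ k *
        ee ((m : ℂ) * (c : ℂ) * z ^ 2 / ((c : ℂ) * τ + (d : ℂ))) * φ τ z

/-- The theta function `θ_{m,ℓ}(τ,z) = ∑_{r ≡ ℓ (mod 2m)} q^{r²/4m} y^r`. -/
def jTheta (m : ℕ) (l : ℤ) (τ z : ℂ) : ℂ :=
  ∑' n : ℤ, ee (((l : ℂ) + 2 * (m : ℂ) * (n : ℂ)) ^ 2 / (4 * (m : ℂ)) * τ +
      ((l : ℂ) + 2 * (m : ℂ) * (n : ℂ)) * z)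

/-- The point `z_s = ατ + β` for `s = (α,β) ∈ ℚ²`. -/
def zpt (s : ℚ × ℚ) (τ : ℂ) : ℂ := (s.1 : ℚ) * τ + (s.2 : ℚ)

/-- A holomorphic function on `ℍ × ℂ` satisfying the index-`m` elliptic transformation law,
together with its Fourier coefficient data `coeff Δ ℓ = C(Δ,ℓ)` (so that
`c(n,r) = C(4nm - r², r)`, `C(Δ,ℓ)` depends on `ℓ` only modulo `2m`, and `C(Δ,ℓ) = 0` on
pairs with `Δ + ℓ² ≢ 0 (mod 4m)`). -/
structure EllFormData (m : ℕ) where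
  toFun : ℂ → ℂ → ℂ
  coeff : ℤ → ℤ → ℂ
  holo : ∀ τ z : ℂ, 0 < τ.im → DifferentiableAt ℂ (fun p : ℂ × ℂ => toFun p.1 p.2) (τ, z)
  elliptic : EllipticLaw m toFun
  expansion : ∀ τ z : ℂ, 0 < τ.im →
    HasSum (fun p : ℤ × ℤ => coeff (4 * (m : ℤ) * p.1 - p.2 ^ 2) p.2 *
      ee ((p.1 : ℂ) * τ + (p.2 : ℂ) * z)) (toFun τ z)
  periodic : ∀ Δ l : ℤ, coeff Δ (l + 2 * (m : ℤ)) = coeff Δ l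
  support : ∀ Δ l : ℤ, ¬ (4 * (m : ℤ)) ∣ (Δ + l ^ 2) → coeff Δ l = 0

/-- An elliptic form is weak if `c(n,r) = 0` for `n < 0`. -/
def IsWeakC (m : ℕ) (C : ℤ → ℤ → ℂ) : Prop :=
  ∀ n r : ℤ, n < 0 → C (4 * (m : ℤ) * n - r ^ 2) r = 0

/-- Even coefficients: `C(Δ,-ℓ) = C(Δ,ℓ)`. -/
def IsEvenC (C : ℤ → ℤ → ℂ) : Prop := ∀ Δ l : ℤ, C Δ (-l) = C Δ l

/-- Holomorphic (as opposed to weak): `C(Δ,ℓ) = 0` for `Δ < 0`. -/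
def IsHolC (C : ℤ → ℤ → ℂ) : Prop := ∀ Δ l : ℤ, Δ < 0 → C Δ l = 0

/-- Cuspidal: `C(Δ,ℓ) = 0` for `Δ ≤ 0`. -/
def IsCuspC (C : ℤ → ℤ → ℂ) : Prop := ∀ Δ l : ℤ, Δ ≤ 0 → C Δ l = 0

/-- Optimal growth: `C(Δ,ℓ) = 0` for `Δ < -1`. -/
def IsOGC (C : ℤ → ℤ → ℂ) : Prop := ∀ Δ l : ℤ, Δ < -1 → C Δ l = 0

/-!
Multiplying `φ` by `exp (-m E₂ (2πiz)² / 12)` turns its Taylor coefficients at `z = 0` into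
level-one modular forms of weight `1 + ν`. There are none in weight `2`; applied to `φ` and to
its twists by `l ↦ a l` with `a² ≡ 1` modulo `4m`, this kills the polar coefficients, so `φ` is
holomorphic. The same Taylor coefficients show that holomorphic forms make up a finite-dimensional
space and that their Fourier coefficients are bounded for an absolute value of `ℂ` extending the
`p`-adic one, `p > 2m`.

For a common eigenform of the Hecke operators `T_p` with eigenvalues `ν_p`, the coefficients
`c_k = C(p²ᵏΔ, pᵏr)` satisfy `p c_{k+2} + c_k = ν_p c_{k+1}`. Since `1 / p` is `p`-adically large,
boundedness forces `ν_p = (-Δ / p) (p + 1)`, so all positive `Δ` in the support lie in one square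
class. A nontrivial class has a prime at which every `Δ` has odd valuation, and the trivial class
is treated at the prime `2`; in both cases the support is so sparse that the behaviour of the
theta decomposition under `τ ↦ -1 / τ` makes the form vanish.
-/

/-! ### The exponential and uniqueness of Fourier expansions -/

lemma ee_add (x y : ℂ) : ee (x + y) = ee x * ee y := by
  simp only [ee, mul_add, Complex.exp_add]

lemma ee_zero : ee 0 = 1 := by simp [ee]

lemma ee_ne_zero (x : ℂ) : ee x ≠ 0 := Complex.exp_ne_zero _

lemma ee_neg (x : ℂ) : ee (-x) = (ee x)⁻¹ := by
  simp only [ee, mul_neg, Complex.exp_neg]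

lemma ee_eq_one_iff {x : ℂ} : ee x = 1 ↔ ∃ n : ℤ, x = n := by
  rw [ee, Complex.exp_eq_one_iff]
  refine exists_congr fun n => ?_
  rw [mul_comm (n : ℂ), mul_right_inj' Complex.two_pi_I_ne_zero]

lemma ee_intCast (n : ℤ) : ee n = 1 := ee_eq_one_iff.mpr ⟨n, rfl⟩

lemma ee_eq_of_eq_add_intCast {x y : ℂ} (n : ℤ) (h : x = y + n) : ee x = ee y := by
  rw [h, ee_add, ee_intCast, mul_one]

lemma ee_natCast_mul (n : ℕ) (x : ℂ) : ee (n * x) = ee x ^ n := by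
  rw [ee, ee, ← Complex.exp_nat_mul]
  ring_nf

lemma norm_ee (x : ℂ) : ‖ee x‖ = Real.exp (-2 * Real.pi * x.im) := by
  rw [ee, Complex.norm_exp]
  simp [Complex.mul_re, Complex.mul_im]

lemma differentiable_ee : Differentiable ℂ ee := by unfold ee; fun_prop

lemma ee_intCast_div {N : ℕ} [NeZero N] (j : ℤ) : ee (j / N) = ZMod.stdAddChar (j : ZMod N) := by
  rw [ZMod.stdAddChar_coe, ee, mul_div_assoc]

lemma sum_ee_mul_valMinAbs_div {N : ℕ} [NeZero N] (n : ℤ) :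
    ∑ x : ZMod N, ee (n * x.valMinAbs / N) = if (N : ℤ) ∣ n then (N : ℂ) else 0 := by
  have hchar (x : ZMod N) : ee (n * x.valMinAbs / N) = ZMod.stdAddChar (x * (n : ZMod N)) := by
    rw [← Int.cast_mul, ee_intCast_div, Int.cast_mul, ZMod.coe_valMinAbs, mul_comm]
  simp only [hchar, AddChar.sum_mulShift _ (ZMod.isPrimitive_stdAddChar N),
    ZMod.intCast_zmod_eq_zero_iff_dvd, ZMod.card, Nat.cast_ite, Nat.cast_zero]

lemma eq_zero_of_hasSum_ee_real {a : ℤ → ℂ}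
    (h : ∀ x : ℝ, HasSum (fun n => a n * ee (n * x)) 0) : a = 0 := by
  have ha : Summable fun n : ℤ => a n • (fourier n : C(AddCircle (1 : ℝ), ℂ)) := by
    refine Summable.of_norm ?_
    simpa [norm_smul, fourier_norm, ee_zero] using (h 0).summable.norm
  have hfourier (n : ℤ) (x : ℝ) : (fourier n (x : AddCircle (1 : ℝ)) : ℂ) = ee (n * x) := by
    rw [fourier_coe_apply, ee]
    push_cast
    ring_nf
  have hzero : HasSum (fun n : ℤ => a n • (fourier n : C(AddCircle (1 : ℝ), ℂ))) 0 := by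
    convert ha.hasSum
    ext x
    induction x using QuotientAddGroup.induction_on with | _ x
    have hx := (ContinuousMap.evalCLM ℂ (x : AddCircle (1 : ℝ))).hasSum ha.hasSum
    refine (h x).unique (hx.congr_fun fun n => ?_)
    simp [hfourier]
  funext k
  let coeffCLM : C(AddCircle (1 : ℝ), ℂ) →L[ℂ] ℂ :=
    (innerSL ℂ (fourierLp 2 k)).comp (ContinuousMap.toLp 2 AddCircle.haarAddCircle ℂ)
  have hcoeff (n : ℤ) : coeffCLM (a n • fourier n) = if n = k then a k else 0 := by
    have := orthonormal_iff_ite.mp (orthonormal_fourier (T := 1)) k n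
    rw [map_smul, show coeffCLM (fourier n) = if k = n then 1 else 0 from this]
    rcases eq_or_ne n k with rfl | hnk
    · simp
    · simp [hnk, hnk.symm]
  simpa using (hasSum_ite_eq k (a k)).unique
    ((coeffCLM.hasSum hzero).congr_fun fun n => (hcoeff n).symm)

lemma eq_zero_of_hasSum_ee {N : ℕ} (hN : 0 < N) {a : ℤ → ℂ}
    (h : ∀ τ : ℂ, 0 < τ.im → HasSum (fun n => a n * ee (n / N * τ)) 0) : a = 0 := by
  have hN' : (N : ℂ) ≠ 0 := by exact_mod_cast hN.ne'
  have hline : (fun n => a n * ee (n / N * I)) = 0 := by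
    refine eq_zero_of_hasSum_ee_real fun x => ?_
    refine (h (N * x + I) (by simp)).congr_fun fun n => ?_
    rw [mul_assoc, ← ee_add]
    congr 2
    field_simp
    ring
  funext n
  simpa [ee_ne_zero] using congrFun hline n

lemma eq_zero_of_hasSum_ee_prod {c : ℤ × ℤ → ℂ}
    (h : ∀ τ z : ℂ, 0 < τ.im → HasSum (fun p : ℤ × ℤ => c p * ee (p.1 * τ + p.2 * z)) 0) :
    c = 0 := by
  have hfiber (τ : ℂ) (hτ : 0 < τ.im) :
      (fun r : ℤ => ∑' n : ℤ, c (n, r) * ee (n * τ)) = 0 := by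
    refine eq_zero_of_hasSum_ee_real fun x => ?_
    have hswap := (Equiv.prodComm ℤ ℤ).hasSum_iff.mpr (h τ x hτ)
    refine hswap.prod_fiberwise fun r => ?_
    have hfactor : (∑' n : ℤ, c (n, r) * ee (n * τ)) * ee (r * x) =
        ∑' n : ℤ, c (n, r) * ee (n * τ + r * x) := by
      rw [← tsum_mul_right]
      exact tsum_congr fun n => by rw [ee_add, mul_assoc]
    rw [hfactor]
    exact (hswap.summable.prod_factor r).hasSum
  funext ⟨n, r⟩
  refine congrFun (eq_zero_of_hasSum_ee (a := fun n => c (n, r)) one_pos fun τ hτ => ?_) n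
  have hsum : Summable fun n : ℤ => c (n, r) * ee (n * τ) := by
    simpa [Function.comp_def] using
      (h τ 0 hτ).summable.comp_injective (Prod.mk_left_injective r)
  simpa using hsum.hasSum_iff.mpr (congrFun (hfiber τ hτ) r)

/-! ### Generating the modular law from `S` and `T` -/

section ModularLaw

open UpperHalfPlane ModularGroup
open scoped MatrixGroups

/-- The law of `ModularLaw k m` for the single matrix `g`. -/
def ModularLawAt (k : ℤ) (m : ℕ) (f : ℂ → ℂ → ℂ) (g : SL(2, ℤ)) : Prop :=
  ∀ (τ : ℍ) (z : ℂ), f ↑(g • τ) (z / denom g τ) =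
    denom g τ ^ k * ee (m * (g 1 0 : ℤ) * z ^ 2 / denom g τ) * f τ z

variable {k : ℤ} {m : ℕ} {f : ℂ → ℂ → ℂ} {g h : SL(2, ℤ)}

lemma denom_mul_smul (g h : SL(2, ℤ)) (τ : ℍ) :
    denom ↑(g * h) τ = denom g ↑(h • τ) * denom h τ := by
  have hden := denom_ne_zero h τ
  simp only [denom_apply] at hden ⊢
  simp only [coe_specialLinearGroup_apply, algebraMap_int_eq, eq_intCast, ofReal_intCast,
    Matrix.SpecialLinearGroup.coe_mul, Matrix.mul_apply, Fin.sum_univ_two, Int.cast_add,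
    Int.cast_mul]
  field_simp
  ring

lemma apply_one_zero_mul_denom (g h : SL(2, ℤ)) (τ : ℍ) :
    ((g * h : SL(2, ℤ)) 1 0 : ℤ) * denom h τ =
      (g 1 0 : ℤ) + denom ↑(g * h) τ * (h 1 0 : ℤ) := by
  have hdet : (h 0 0 * h 1 1 - h 0 1 * h 1 0 : ℂ) = 1 := by
    exact_mod_cast (Matrix.det_fin_two h.1).symm.trans h.2
  simp only [denom_apply, Matrix.SpecialLinearGroup.coe_mul, Matrix.mul_apply, Fin.sum_univ_two]
  push_cast
  linear_combination (g 1 0 : ℂ) * hdet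

lemma exponent_cocycle (g h : SL(2, ℤ)) (τ : ℍ) (z : ℂ) :
    m * ((g * h : SL(2, ℤ)) 1 0 : ℤ) * z ^ 2 / denom ↑(g * h) τ =
      m * (g 1 0 : ℤ) * (z / denom h τ) ^ 2 / denom g ↑(h • τ) +
        m * (h 1 0 : ℤ) * z ^ 2 / denom h τ := by
  have hc := apply_one_zero_mul_denom g h τ
  rw [denom_mul_smul] at hc ⊢
  have hg := denom_ne_zero g (h • τ)
  have hh := denom_ne_zero h τ
  set a := denom ↑g ↑(h • τ)
  set b := denom ↑h τ
  field_simp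
  linear_combination (m * z ^ 2 : ℂ) * hc

lemma ModularLawAt.mul (hg : ModularLawAt k m f g) (hh : ModularLawAt k m f h) :
    ModularLawAt k m f (g * h) := by
  intro τ z
  rw [exponent_cocycle, denom_mul_smul, mul_smul, mul_comm (denom g _), ← div_div, hg, hh, mul_zpow,
    ee_add]
  ring

lemma ModularLawAt.inv (hg : ModularLawAt k m f g) : ModularLawAt k m f g⁻¹ := by
  intro τ z
  have hden := denom_mul_smul g g⁻¹ τ
  have hexp := exponent_cocycle (m := m) g g⁻¹ τ z
  have hlaw := hg (g⁻¹ • τ) (z / denom ↑g⁻¹ τ)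
  have hone : denom ↑(1 : SL(2, ℤ)) τ = 1 := by simp
  rw [div_div, mul_comm (denom ↑g⁻¹ _), ← hden, smul_inv_smul, mul_inv_cancel, hone,
    div_one] at hlaw
  rw [mul_inv_cancel, hone] at hden
  have hexp_zero : m * ((g * g⁻¹ : SL(2, ℤ)) 1 0 : ℤ) * z ^ 2 / denom ↑(g * g⁻¹) τ = 0 := by
    rw [mul_inv_cancel]
    simp
  rw [hexp_zero] at hexp
  rw [hlaw, ← mul_assoc, mul_mul_mul_comm, ← mul_zpow, mul_comm (denom ↑g⁻¹ _), ← hden, one_zpow,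
    ← ee_add, add_comm, ← hexp, ee_zero, one_mul, one_mul]

lemma ModularLaw.of_S_T
    (hS : ∀ τ z : ℂ, 0 < τ.im → f (-1 / τ) (z / τ) = τ ^ k * ee (m * z ^ 2 / τ) * f τ z)
    (hT : ∀ τ z : ℂ, 0 < τ.im → f (τ + 1) z = f τ z) : ModularLaw k m f := by
  have hall (g : SL(2, ℤ)) : ModularLawAt k m f g := by
    have hg : g ∈ Subgroup.closure {S, T} := by
      rw [SpecialLinearGroup.SL2Z_generators]
      trivial
    induction hg using Subgroup.closure_induction with
    | mem x hx =>
      rcases hx with rfl | rfl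
      · intro τ z
        rw [denom_S, modular_S_smul]
        simpa [S, neg_div, inv_neg] using hS τ z τ.im_pos
      · intro τ z
        rw [denom_apply, coe_specialLinearGroup_apply]
        simpa [T, ee_zero] using hT τ z τ.im_pos
    | one => simp [ModularLawAt, ee_zero]
    | mul x y _ _ hx hy => exact hx.mul hy
    | inv x _ hx => exact hx.inv
  intro τ hτ z a b c d hdet
  let g : SL(2, ℤ) := ⟨!![a, b; c, d], by rw [Matrix.det_fin_two_of, hdet]⟩
  have hlaw := hall g
  simp only [ModularLawAt, denom_apply, coe_specialLinearGroup_apply] at hlaw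
  simpa [g] using hlaw ⟨τ, hτ⟩ z

end ModularLaw

/-! ### Weight-one series and the index-changing operators -/

lemma ne_zero_of_im_pos {τ : ℂ} (hτ : 0 < τ.im) : τ ≠ 0 := by
  rintro rfl
  simp at hτ

lemma im_neg_one_div_pos {τ : ℂ} (hτ : 0 < τ.im) : 0 < (-1 / τ).im := by
  rw [neg_div, one_div, ← inv_neg]
  exact UpperHalfPlane.im_inv_neg_coe_pos ⟨τ, hτ⟩

lemma im_natCast_mul_pos {τ : ℂ} (hτ : 0 < τ.im) {p : ℕ} (hp : 0 < p) : 0 < (p * τ).im := by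
  simpa using mul_pos (Nat.cast_pos.mpr hp) hτ

lemma im_add_intCast_div_pos {τ : ℂ} (hτ : 0 < τ.im) {p : ℕ} (hp : 0 < p) (b : ℤ) :
    0 < ((τ + b) / p).im := by
  rw [Complex.div_natCast_im]
  simpa using div_pos hτ (Nat.cast_pos.mpr hp)

/-- The double Fourier series `∑ c(n,r) q^n y^r`. -/
def fourierSeries (c : ℤ × ℤ → ℂ) (τ z : ℂ) : ℂ :=
  ∑' x : ℤ × ℤ, c x * ee (x.1 * τ + x.2 * z)

/-- Coefficients `c(n,r)` whose Fourier series converges on `ℍ × ℂ` and obeys the weight-one,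
index-`m` modular law under `S`; invariance under `T` is automatic. -/
structure IsWeightOneSeries (m : ℕ) (c : ℤ × ℤ → ℂ) : Prop where
  summable : ∀ τ z : ℂ, 0 < τ.im → Summable fun x : ℤ × ℤ => c x * ee (x.1 * τ + x.2 * z)
  map_S : ∀ τ z : ℂ, 0 < τ.im →
    fourierSeries c (-1 / τ) (z / τ) = τ * ee (m * z ^ 2 / τ) * fourierSeries c τ z

lemma fourierSeries_add_intCast (c : ℤ × ℤ → ℂ) (τ z : ℂ) (b : ℤ) :
    fourierSeries c (τ + b) z = fourierSeries c τ z := by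
  refine tsum_congr fun x => ?_
  rw [ee_eq_of_eq_add_intCast (x.1 * b)]
  push_cast
  ring

lemma hasSum_ite_dvd {ι : Type*} {p : ℕ} [NeZero p] {u : ι → ℂ} {j : ι → ℤ} {s : ZMod p → ℂ}
    (h : ∀ b : ZMod p, HasSum (fun x => u x * ee (j x * b.valMinAbs / p)) (s b)) :
    HasSum (fun x => if (p : ℤ) ∣ j x then u x else 0) ((p : ℂ)⁻¹ * ∑ b, s b) := by
  refine ((hasSum_sum fun b _ => h b).mul_left _).congr_fun fun x => ?_
  rw [← Finset.mul_sum, sum_ee_mul_valMinAbs_div]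
  split_ifs
  · field_simp [NeZero.ne p]
  · simp

/-- The operator `V_p`, multiplying the index by `p`, on Fourier coefficients of weight one. -/
def heckeV (p : ℕ) (c : ℤ × ℤ → ℂ) (x : ℤ × ℤ) : ℂ :=
  c (p * x.1, x.2) + if (p : ℤ) ∣ x.1 ∧ (p : ℤ) ∣ x.2 then c (x.1 / p, x.2 / p) else 0

/-- The operator `W_p` on Fourier coefficients, averaging `φ(τ, z / p)` over the `p`-torsion
points; it divides the index by `p²`, and `m` is the resulting index. Lattice sums run over the
representatives of `ZMod p` of least absolute value because these are symmetric for odd `p`. -/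
def heckeW (m p : ℕ) [NeZero p] (c : ℤ × ℤ → ℂ) (x : ℤ × ℤ) : ℂ :=
  ∑ l : ZMod p, c (x.1 - x.2 * l.valMinAbs + m * l.valMinAbs ^ 2,
    p * (x.2 - 2 * m * l.valMinAbs))

namespace IsWeightOneSeries

variable {m p : ℕ} {c : ℤ × ℤ → ℂ} {τ : ℂ}

lemma hasSum (h : IsWeightOneSeries m c) (hτ : 0 < τ.im) (z : ℂ) :
    HasSum (fun x : ℤ × ℤ => c x * ee (x.1 * τ + x.2 * z)) (fourierSeries c τ z) :=
  (h.summable τ z hτ).hasSum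

lemma modularLaw (h : IsWeightOneSeries m c) : ModularLaw 1 m (fourierSeries c) :=
  .of_S_T (fun τ z hτ => by simpa using h.map_S τ z hτ)
    fun τ z _ => by simpa using fourierSeries_add_intCast c τ z 1

lemma hasSum_fst_mul (h : IsWeightOneSeries m c) [NeZero p] (hτ : 0 < τ.im) (z : ℂ) :
    HasSum (fun x : ℤ × ℤ => c (p * x.1, x.2) * ee (x.1 * τ + x.2 * z))
      ((p : ℂ)⁻¹ * ∑ b : ZMod p, fourierSeries c ((τ + b.valMinAbs) / p) z) := by
  have hp : (p : ℤ) ≠ 0 := NeZero.ne _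
  have havg := hasSum_ite_dvd (p := p) (j := Prod.fst)
    (u := fun x : ℤ × ℤ => c x * ee (x.1 * (τ / p) + x.2 * z)) fun b =>
      (h.hasSum (im_add_intCast_div_pos hτ (NeZero.pos p) b.valMinAbs) z).congr_fun fun x => by
        rw [mul_assoc, ← ee_add]
        congr 2
        ring
  have hinj : Function.Injective fun x : ℤ × ℤ => ((p : ℤ) * x.1, x.2) :=
    (mul_right_injective₀ hp).prodMap Function.injective_id
  rw [← hinj.hasSum_iff] at havg
  · refine havg.congr_fun fun x => ?_
    simp only [Function.comp_apply, dvd_mul_right, if_true]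
    push_cast
    congr 2
    field_simp [NeZero.ne p]
  · rintro ⟨n, r⟩ hx
    refine if_neg ?_
    rintro ⟨k, rfl⟩
    exact hx ⟨(k, r), rfl⟩

lemma hasSum_ite_div (h : IsWeightOneSeries m c) [NeZero p] (hτ : 0 < τ.im) (z : ℂ) :
    HasSum (fun x : ℤ × ℤ => (if (p : ℤ) ∣ x.1 ∧ (p : ℤ) ∣ x.2 then c (x.1 / p, x.2 / p) else 0) *
      ee (x.1 * τ + x.2 * z)) (fourierSeries c (p * τ) (p * z)) := by
  have hp : (p : ℤ) ≠ 0 := NeZero.ne _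
  have hinj : Function.Injective fun x : ℤ × ℤ => ((p : ℤ) * x.1, (p : ℤ) * x.2) :=
    (mul_right_injective₀ hp).prodMap (mul_right_injective₀ hp)
  rw [← hinj.hasSum_iff]
  · refine (h.hasSum (im_natCast_mul_pos hτ (NeZero.pos p)) (p * z)).congr_fun fun x => ?_
    simp only [Function.comp_apply, dvd_mul_right, and_self, if_true,
      Int.mul_ediv_cancel_left _ hp]
    push_cast
    ring_nf
  · rintro ⟨n, r⟩ hx
    rw [if_neg, zero_mul]
    rintro ⟨⟨k, rfl⟩, ⟨l, rfl⟩⟩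
    exact hx ⟨(k, l), rfl⟩

lemma hasSum_heckeV (h : IsWeightOneSeries m c) [NeZero p] (hτ : 0 < τ.im) (z : ℂ) :
    HasSum (fun x : ℤ × ℤ => heckeV p c x * ee (x.1 * τ + x.2 * z))
      ((p : ℂ)⁻¹ * ∑ b : ZMod p, fourierSeries c ((τ + b.valMinAbs) / p) z +
        fourierSeries c (p * τ) (p * z)) :=
  ((h.hasSum_fst_mul hτ z).add (h.hasSum_ite_div hτ z)).congr_fun fun _ => add_mul ..

lemma fourierSeries_S_div (h : IsWeightOneSeries m c) [Fact p.Prime] (hτ : 0 < τ.im) (z : ℂ)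
    {b : ZMod p} (hb : b ≠ 0) :
    fourierSeries c ((-1 / τ + b.valMinAbs) / p) (z / τ) = τ * ee ((m * p : ℕ) * z ^ 2 / τ) *
      fourierSeries c ((τ + (-b⁻¹).valMinAbs) / p) z := by
  have hp : (p : ℂ) ≠ 0 := NeZero.ne _
  have hτ0 := ne_zero_of_im_pos hτ
  set b' := -b⁻¹
  obtain ⟨q, hq⟩ : (p : ℤ) ∣ b.valMinAbs * b'.valMinAbs + 1 := by
    rw [← ZMod.intCast_zmod_eq_zero_iff_dvd]
    simp [b', hb]
  have hqC : (b.valMinAbs * b'.valMinAbs + 1 : ℂ) = p * q := by exact_mod_cast hq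
  have hlaw := h.modularLaw ((τ + b'.valMinAbs) / p)
    (im_add_intCast_div_pos hτ (NeZero.pos p) _) z b.valMinAbs (-q) p (-b'.valMinAbs)
    (by linear_combination -hq)
  have hden : (p : ℤ) * ((τ + b'.valMinAbs) / p) + (-b'.valMinAbs : ℤ) = τ := by
    push_cast
    field_simp
    ring
  have hnum : (b.valMinAbs * ((τ + b'.valMinAbs) / p) + (-q : ℤ)) / τ =
      (-1 / τ + b.valMinAbs) / p := by
    push_cast
    field_simp
    linear_combination hqC
  rw [hden, hnum, zpow_one] at hlaw
  rw [hlaw]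
  push_cast
  rfl

lemma heckeV [Fact p.Prime] (h : IsWeightOneSeries m c) :
    IsWeightOneSeries (m * p) (heckeV p c) := by
  refine ⟨fun τ z hτ => (h.hasSum_heckeV hτ z).summable, fun τ z hτ => ?_⟩
  have hp : (p : ℂ) ≠ 0 := NeZero.ne _
  have hp0 : 0 < p := NeZero.pos p
  have hτ0 := ne_zero_of_im_pos hτ
  have hlast : fourierSeries c (p * (-1 / τ)) (p * (z / τ)) =
      (p : ℂ)⁻¹ * (τ * ee ((m * p : ℕ) * z ^ 2 / τ) * fourierSeries c (τ / p) z) := by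
    have hS := h.map_S (τ / p) z (by simpa using im_add_intCast_div_pos hτ hp0 0)
    rw [show (-1 / (τ / p) : ℂ) = p * (-1 / τ) by field_simp,
      show z / (τ / p) = p * (z / τ) by field_simp] at hS
    rw [hS, show m * z ^ 2 / (τ / p) = (m * p : ℕ) * z ^ 2 / τ by push_cast; field_simp]
    field_simp
  have hzero : fourierSeries c (-1 / τ / p) (z / τ) =
      p * (τ * ee ((m * p : ℕ) * z ^ 2 / τ) * fourierSeries c (p * τ) (p * z)) := by
    have hS := h.map_S (p * τ) (p * z) (im_natCast_mul_pos hτ hp0)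
    rw [show (-1 / (p * τ) : ℂ) = -1 / τ / p by field_simp,
      show p * z / (p * τ) = z / τ by field_simp] at hS
    rw [hS, show m * (p * z) ^ 2 / (p * τ) = (m * p : ℕ) * z ^ 2 / τ by push_cast; field_simp]
    field_simp
  have hrest : ∑ b ∈ Finset.univ.erase (0 : ZMod p),
        fourierSeries c ((-1 / τ + b.valMinAbs) / p) (z / τ) =
      τ * ee ((m * p : ℕ) * z ^ 2 / τ) * ∑ b ∈ Finset.univ.erase (0 : ZMod p),
        fourierSeries c ((τ + b.valMinAbs) / p) z := by
    rw [Finset.mul_sum]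
    refine Finset.sum_nbij' (fun b => -b⁻¹) (fun b => -b⁻¹) ?_ ?_ ?_ ?_ fun b hb =>
      h.fourierSeries_S_div hτ z (Finset.ne_of_mem_erase hb) <;> simp [inv_neg]
  rw [fourierSeries, fourierSeries, (h.hasSum_heckeV hτ z).tsum_eq,
    (h.hasSum_heckeV (im_neg_one_div_pos hτ) (z / τ)).tsum_eq,
    ← Finset.add_sum_erase _ _ (Finset.mem_univ (0 : ZMod p)),
    ← Finset.add_sum_erase _ _ (Finset.mem_univ (0 : ZMod p)), hrest, hlast]
  simp only [ZMod.valMinAbs_zero, Int.cast_zero, add_zero]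
  rw [hzero]
  field_simp
  ring

lemma hasSum_translate (h : IsWeightOneSeries (m * p ^ 2) c) [NeZero p] (hτ : 0 < τ.im) (z : ℂ)
    (l : ℤ) :
    HasSum (fun x : ℤ × ℤ =>
        c (x.1 - x.2 * l + m * l ^ 2, p * (x.2 - 2 * m * l)) * ee (x.1 * τ + x.2 * z))
      ((p : ℂ)⁻¹ * ∑ b : ZMod p, ee (m * (l ^ 2 * τ + 2 * l * z)) *
        fourierSeries c τ ((z + l * τ + b.valMinAbs) / p)) := by
  have hp : (p : ℤ) ≠ 0 := NeZero.ne _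
  have havg := hasSum_ite_dvd (p := p) (j := Prod.snd) (u := fun x : ℤ × ℤ =>
    c x * ee (m * (l ^ 2 * τ + 2 * l * z) + x.1 * τ + x.2 * ((z + l * τ) / p))) fun b =>
      ((h.hasSum hτ ((z + l * τ + b.valMinAbs) / p)).mul_left
          (ee (m * (l ^ 2 * τ + 2 * l * z)))).congr_fun fun x => by
        rw [mul_left_comm, mul_assoc, ← ee_add, ← ee_add]
        congr 2
        ring
  have hinj : Function.Injective fun x : ℤ × ℤ =>
      (x.1 - x.2 * l + m * l ^ 2, (p : ℤ) * (x.2 - 2 * m * l)) := by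
    rintro ⟨n, r⟩ ⟨n', r'⟩ hx
    simp only [Prod.mk.injEq, mul_right_inj' hp, sub_left_inj] at hx
    obtain ⟨hn, rfl⟩ := hx
    simpa using hn
  rw [← hinj.hasSum_iff] at havg
  · refine havg.congr_fun fun x => ?_
    simp only [Function.comp_apply, dvd_mul_right, if_true]
    push_cast
    congr 2
    field_simp [NeZero.ne p]
    ring
  · rintro ⟨n, r⟩ hx
    refine if_neg ?_
    rintro ⟨s, rfl⟩
    refine hx ⟨(n + s * l + m * l ^ 2, s + 2 * m * l), ?_⟩
    simp only [Prod.mk.injEq]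
    constructor <;> ring

lemma hasSum_heckeW (h : IsWeightOneSeries (m * p ^ 2) c) [NeZero p] (hτ : 0 < τ.im) (z : ℂ) :
    HasSum (fun x : ℤ × ℤ => heckeW m p c x * ee (x.1 * τ + x.2 * z))
      (∑ l : ZMod p, (p : ℂ)⁻¹ * ∑ b : ZMod p,
        ee (m * ((l.valMinAbs : ℂ) ^ 2 * τ + 2 * l.valMinAbs * z)) *
          fourierSeries c τ ((z + l.valMinAbs * τ + b.valMinAbs) / p)) := by
  simp only [_root_.heckeW, Finset.sum_mul]
  exact hasSum_sum fun l _ => h.hasSum_translate hτ z l.valMinAbs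

lemma heckeW [NeZero p] (hp2 : Odd p) (h : IsWeightOneSeries (m * p ^ 2) c) :
    IsWeightOneSeries m (heckeW m p c) := by
  refine ⟨fun τ z hτ => (h.hasSum_heckeW hτ z).summable, fun τ z hτ => ?_⟩
  have hp : (p : ℂ) ≠ 0 := NeZero.ne _
  have hτ0 := ne_zero_of_im_pos hτ
  have hterm (l b : ℤ) : ee (m * ((l : ℂ) ^ 2 * (-1 / τ) + 2 * l * (z / τ))) *
        fourierSeries c (-1 / τ) ((z / τ + l * (-1 / τ) + b) / p) =
      τ * ee (m * z ^ 2 / τ) * (ee (m * ((b : ℂ) ^ 2 * τ + 2 * b * z)) *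
        fourierSeries c τ ((z + b * τ + (-l : ℤ)) / p)) := by
    have harg : (z / τ + l * (-1 / τ) + b) / p = (z + b * τ + (-l : ℤ)) / p / τ := by
      push_cast
      field_simp
      ring
    have hee : ee (m * ((l : ℂ) ^ 2 * (-1 / τ) + 2 * l * (z / τ))) *
          ee ((m * p ^ 2 : ℕ) * ((z + b * τ + (-l : ℤ)) / p) ^ 2 / τ) =
        ee (m * z ^ 2 / τ) * ee (m * ((b : ℂ) ^ 2 * τ + 2 * b * z)) := by
      rw [← ee_add, ← ee_add]
      refine ee_eq_of_eq_add_intCast (-(2 * m * l * b)) ?_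
      push_cast
      field_simp
      ring
    rw [harg, h.map_S _ _ hτ]
    linear_combination τ * fourierSeries c τ ((z + b * τ + (-l : ℤ)) / p) * hee
  rw [fourierSeries, fourierSeries, (h.hasSum_heckeW hτ z).tsum_eq,
    (h.hasSum_heckeW (im_neg_one_div_pos hτ) (z / τ)).tsum_eq, ← Finset.mul_sum, ← Finset.mul_sum,
    mul_left_comm, Finset.sum_comm, Finset.mul_sum]
  simp only [hterm, ← Finset.mul_sum]
  congr 2
  refine Finset.sum_congr rfl fun b _ => ?_
  congr 1
  refine Fintype.sum_equiv (Equiv.neg _) _ _ fun l => ?_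
  rw [Equiv.neg_apply, ZMod.valMinAbs_neg_of_ne_half fun hl => ?_]
  exact (Nat.not_even_iff_odd.mpr hp2) (hl ▸ even_two_mul _)

end IsWeightOneSeries

namespace IsWeightOneSeries

variable {m : ℕ} {c d : ℤ × ℤ → ℂ}

protected lemma zero : IsWeightOneSeries m 0 :=
  ⟨fun τ z _ => by simp, fun τ z _ => by simp [fourierSeries]⟩

lemma fourierSeries_add (hc : IsWeightOneSeries m c) (hd : IsWeightOneSeries m d) {τ : ℂ}
    (hτ : 0 < τ.im) (z : ℂ) :
    fourierSeries (c + d) τ z = fourierSeries c τ z + fourierSeries d τ z :=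
  (((hc.hasSum hτ z).add (hd.hasSum hτ z)).congr_fun fun _ => add_mul ..).tsum_eq

protected lemma add (hc : IsWeightOneSeries m c) (hd : IsWeightOneSeries m d) :
    IsWeightOneSeries m (c + d) where
  summable τ z hτ := by simpa [add_mul] using (hc.summable τ z hτ).add (hd.summable τ z hτ)
  map_S τ z hτ := by
    rw [hc.fourierSeries_add hd hτ, hc.fourierSeries_add hd (im_neg_one_div_pos hτ),
      hc.map_S τ z hτ, hd.map_S τ z hτ, mul_add]

lemma const_smul (a : ℂ) (hc : IsWeightOneSeries m c) : IsWeightOneSeries m (a • c) := by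
  have hsmul (τ z : ℂ) : fourierSeries (a • c) τ z = a * fourierSeries c τ z := by
    simp only [fourierSeries, ← tsum_mul_left, Pi.smul_apply, smul_eq_mul, mul_assoc]
  refine ⟨fun τ z hτ => ?_, fun τ z hτ => ?_⟩
  · simpa [mul_assoc] using (hc.summable τ z hτ).mul_left a
  · rw [hsmul, hsmul, hc.map_S τ z hτ, mul_left_comm]

lemma fourierSeries_neg (hc : IsWeightOneSeries m c) {τ : ℂ} (hτ : 0 < τ.im) (z : ℂ) :
    fourierSeries c τ (-z) = -fourierSeries c τ z := by
  simpa [ee_zero, div_neg] using hc.modularLaw τ hτ z (-1) 0 0 (-1) (by norm_num)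

lemma apply_neg (hc : IsWeightOneSeries m c) (n r : ℤ) : c (n, -r) = -c (n, r) := by
  have hneg : ∀ τ z : ℂ, 0 < τ.im →
      HasSum (fun x : ℤ × ℤ => c (x.1, -x.2) * ee (x.1 * τ + x.2 * z))
        (-fourierSeries c τ z) := by
    intro τ z hτ
    have h := hc.hasSum hτ (-z)
    rw [hc.fourierSeries_neg hτ,
      ← (Equiv.prodCongr (Equiv.refl ℤ) (Equiv.neg ℤ)).hasSum_iff] at h
    exact h.congr_fun fun x => by simp [Prod.map]
  have hzero := eq_zero_of_hasSum_ee_prod (c := fun x => c (x.1, -x.2) + c x) fun τ z hτ => by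
    simpa only [neg_add_cancel] using
      ((hneg τ z hτ).add (hc.hasSum hτ z)).congr_fun fun _ => add_mul ..
  exact eq_neg_of_add_eq_zero_left (congrFun hzero (n, r))

end IsWeightOneSeries

/-! ### Coefficient functions of Jacobi forms and Hecke operators -/

/-- The Fourier coefficients `c(n,r) = C(4mn - r², r)`. -/
def toFourierCoeff (m : ℕ) (C : ℤ → ℤ → ℂ) (x : ℤ × ℤ) : ℂ :=
  C (4 * m * x.1 - x.2 ^ 2) x.2

/-- `C` is the coefficient function of a weight-one index-`m` Jacobi form of optimal growth. -/
structure IsOptimalGrowthForm (m : ℕ) (C : ℤ → ℤ → ℂ) : Prop where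
  periodic : ∀ Δ l : ℤ, C Δ (l + 2 * m) = C Δ l
  support : ∀ Δ l : ℤ, ¬ 4 * (m : ℤ) ∣ Δ + l ^ 2 → C Δ l = 0
  optimalGrowth : IsOGC C
  series : IsWeightOneSeries m (toFourierCoeff m C)

lemma eq_of_forall_apply_add_eq {m : ℕ} {f : ℤ → ℂ} (hf : ∀ l, f (l + 2 * m) = f l) {l l' : ℤ}
    (hd : 2 * (m : ℤ) ∣ l - l') : f l = f l' := by
  obtain ⟨k, hk⟩ := hd
  obtain rfl : l = l' + k * (2 * m) := by linarith
  exact Function.Periodic.int_mul hf k l'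

namespace IsOptimalGrowthForm

variable {m : ℕ} {C : ℤ → ℤ → ℂ}

lemma eq_of_dvd_sub (h : IsOptimalGrowthForm m C) (Δ : ℤ) {l l' : ℤ}
    (hd : 2 * (m : ℤ) ∣ l - l') : C Δ l = C Δ l' :=
  eq_of_forall_apply_add_eq (h.periodic Δ) hd

lemma apply_neg (h : IsOptimalGrowthForm m C) (Δ l : ℤ) : C Δ (-l) = -C Δ l := by
  by_cases hd : 4 * (m : ℤ) ∣ Δ + l ^ 2
  · obtain ⟨n, hn⟩ := hd
    obtain rfl : Δ = 4 * m * n - l ^ 2 := by linarith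
    simpa [toFourierCoeff] using h.series.apply_neg n l
  · rw [h.support _ _ hd, h.support _ _ (by rwa [neg_sq]), neg_zero]

end IsOptimalGrowthForm

/-- The space of holomorphic weight-one Jacobi forms of index `m`, given by coefficients. -/
def holomorphicForms (m : ℕ) : Submodule ℂ (ℤ → ℤ → ℂ) where
  carrier := {C | IsOptimalGrowthForm m C ∧ IsHolC C}
  add_mem' := by
    rintro C D ⟨hC, hC'⟩ ⟨hD, hD'⟩
    refine ⟨⟨fun Δ l => ?_, fun Δ l h => ?_, fun Δ l h => ?_, hC.series.add hD.series⟩,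
      fun Δ l h => ?_⟩
    · simp [hC.periodic, hD.periodic]
    · simp [hC.support _ _ h, hD.support _ _ h]
    · simp [hC.optimalGrowth _ _ h, hD.optimalGrowth _ _ h]
    · simp [hC' _ _ h, hD' _ _ h]
  zero_mem' := ⟨⟨by simp, by simp, by simp [IsOGC], .zero⟩, by simp [IsHolC]⟩
  smul_mem' := by
    rintro a C ⟨hC, hC'⟩
    refine ⟨⟨fun Δ l => ?_, fun Δ l h => ?_, fun Δ l h => ?_, hC.series.const_smul a⟩,
      fun Δ l h => ?_⟩
    · simp [hC.periodic]
    · simp [hC.support _ _ h]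
    · simp [hC.optimalGrowth _ _ h]
    · simp [hC' _ _ h]

/-- The extension `f(x / n)` of `f` along multiplication by `n`, zero off the multiples of `n`. -/
def extendByDiv (n : ℤ) (f : ℤ → ℂ) (x : ℤ) : ℂ :=
  if n ∣ x then f (x / n) else 0

section extendByDiv

variable {n k : ℤ}

lemma extendByDiv_mul_self (hn : n ≠ 0) (f : ℤ → ℂ) (x : ℤ) :
    extendByDiv n f (n * x) = f x := by
  simp [extendByDiv, hn]

lemma extendByDiv_of_not_dvd {x : ℤ} (hx : ¬ n ∣ x) (f : ℤ → ℂ) : extendByDiv n f x = 0 :=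
  if_neg hx

lemma extendByDiv_add (f g : ℤ → ℂ) (x : ℤ) :
    extendByDiv n (fun t => f t + g t) x = extendByDiv n f x + extendByDiv n g x := by
  simp only [extendByDiv]
  split_ifs <;> simp

lemma extendByDiv_mul_left (hn : n ≠ 0) (g f : ℤ → ℂ) (x : ℤ) :
    extendByDiv n (fun t => g (n * t) * f t) x = g x * extendByDiv n f x := by
  by_cases hx : n ∣ x
  · obtain ⟨t, rfl⟩ := hx
    simp only [extendByDiv_mul_self hn]
  · simp only [extendByDiv_of_not_dvd hx, mul_zero]

lemma extendByDiv_coprime_mul (hn : n ≠ 0) (hnk : IsCoprime n k) (f : ℤ → ℂ) (x : ℤ) :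
    extendByDiv n f (k * x) = extendByDiv n (fun t => f (k * t)) x := by
  by_cases hx : n ∣ x
  · obtain ⟨t, rfl⟩ := hx
    rw [mul_left_comm, extendByDiv_mul_self hn, extendByDiv_mul_self hn]
  · rw [extendByDiv_of_not_dvd hx, extendByDiv_of_not_dvd (mt hnk.dvd_of_dvd_mul_left hx)]

lemma extendByDiv_extendByDiv (hn : 0 < n) (f : ℤ → ℂ) (x : ℤ) :
    extendByDiv n (extendByDiv k f) x = extendByDiv (n * k) f x := by
  by_cases hx : n ∣ x
  · obtain ⟨t, rfl⟩ := hx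
    rw [extendByDiv_mul_self hn.ne']
    simp only [extendByDiv, mul_dvd_mul_iff_left hn.ne', Int.mul_ediv_mul_of_pos _ _ hn]
  · rw [extendByDiv_of_not_dvd hx, extendByDiv_of_not_dvd (mt dvd_of_mul_right_dvd hx)]

end extendByDiv

/-- An integer inverse of `p` modulo `2m`. -/
def modInverse (m p : ℕ) : ℤ := ((p : ZMod (2 * m))⁻¹).val

lemma dvd_mul_modInverse_sub_one {m p : ℕ} (hm : 0 < m) (hpm : p.Coprime (2 * m)) :
    2 * (m : ℤ) ∣ p * modInverse m p - 1 := by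
  have : NeZero (2 * m) := ⟨by positivity⟩
  suffices ((2 * m : ℕ) : ℤ) ∣ p * modInverse m p - 1 by simpa using this
  rw [← ZMod.intCast_zmod_eq_zero_iff_dvd, modInverse]
  push_cast
  rw [ZMod.natCast_zmod_val, ZMod.coe_mul_inv_eq_one p hpm, sub_self]

/-- The Hecke operator `T_p` in weight one, on coefficient functions. -/
def heckeT (m p : ℕ) : Module.End ℂ (ℤ → ℤ → ℂ) where
  toFun C Δ r := p * C (p ^ 2 * Δ) (p * r) + jacobiSym (-Δ) p * C Δ r +
    extendByDiv (p ^ 2) (fun Δ' => C Δ' (modInverse m p * r)) Δ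
  map_add' C D := by
    funext Δ r
    simp only [Pi.add_apply, extendByDiv_add]
    ring
  map_smul' a C := by
    funext Δ r
    simp only [Pi.smul_apply, smul_eq_mul, RingHom.id_apply, extendByDiv]
    split_ifs <;> ring

lemma heckeT_apply (m p : ℕ) (C : ℤ → ℤ → ℂ) (Δ r : ℤ) :
    heckeT m p C Δ r = p * C (p ^ 2 * Δ) (p * r) + jacobiSym (-Δ) p * C Δ r +
      extendByDiv (p ^ 2) (fun Δ' => C Δ' (modInverse m p * r)) Δ := rfl

lemma jacobiSym_neg_sq_mul {p q : ℕ} (hpq : p.Coprime q) (D : ℤ) :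
    jacobiSym (-((p : ℤ) ^ 2 * D)) q = jacobiSym (-D) q := by
  rw [neg_mul_eq_mul_neg, jacobiSym.mul_left, jacobiSym.sq_one' (by simpa using hpq), one_mul]

lemma commute_heckeT (m : ℕ) {p q : ℕ} (hp : p.Prime) (hq : q.Prime) :
    Commute (heckeT m p) (heckeT m q) := by
  obtain rfl | hpq := eq_or_ne p q
  · exact Commute.refl _
  have hc := (Nat.coprime_primes hp hq).mpr hpq
  have hcz : IsCoprime ((p : ℤ) ^ 2) ((q : ℤ) ^ 2) := (Nat.isCoprime_iff_coprime.mpr hc).pow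
  have hp0 : 0 < (p : ℤ) ^ 2 := pow_pos (by exact_mod_cast hp.pos) 2
  have hq0 : 0 < (q : ℤ) ^ 2 := pow_pos (by exact_mod_cast hq.pos) 2
  refine LinearMap.ext fun C => funext₂ fun D r => ?_
  have hχp (f : ℤ → ℂ) := extendByDiv_mul_left hq0.ne' (fun t => (jacobiSym (-t) p : ℂ)) f D
  have hχq (f : ℤ → ℂ) := extendByDiv_mul_left hp0.ne' (fun t => (jacobiSym (-t) q : ℂ)) f D
  have hcp (f : ℤ → ℂ) := extendByDiv_mul_left hq0.ne' (fun _ => (p : ℂ)) f D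
  have hcq (f : ℤ → ℂ) := extendByDiv_mul_left hp0.ne' (fun _ => (q : ℂ)) f D
  simp only [jacobiSym_neg_sq_mul hc, jacobiSym_neg_sq_mul hc.symm] at hχp hχq
  simp only [Module.End.mul_apply, heckeT_apply, jacobiSym_neg_sq_mul hc,
    jacobiSym_neg_sq_mul hc.symm, extendByDiv_add, extendByDiv_coprime_mul hp0.ne' hcz,
    extendByDiv_coprime_mul hq0.ne' hcz.symm, hχp, hχq, hcp, hcq]
  rw [extendByDiv_extendByDiv hp0, extendByDiv_extendByDiv hq0, mul_comm ((q : ℤ) ^ 2) (_ ^ 2),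
    mul_left_comm (modInverse m q) (p : ℤ), mul_left_comm (modInverse m p) (q : ℤ),
    mul_left_comm (modInverse m p) (modInverse m q), mul_left_comm (q : ℤ) (p : ℤ),
    mul_left_comm ((q : ℤ) ^ 2) ((p : ℤ) ^ 2)]
  ring

/-! ### The identity `W_p V_p V_p = T_p + (p + 1)` -/

lemma heckeV_heckeV_mul_snd {p : ℕ} [NeZero p] (c : ℤ × ℤ → ℂ) (n s : ℤ) :
    heckeV p (heckeV p c) (n, p * s) = c (p * (p * n), p * s) + c (n, s) +
      (if (p : ℤ) ∣ n then c (n, s) else 0) +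
      if (p : ℤ) ∣ s then extendByDiv (p ^ 2) (fun t => c (t, s / p)) n else 0 := by
  have hp : (p : ℤ) ≠ 0 := NeZero.ne _
  simp only [heckeV, dvd_mul_right, and_true, if_true, Int.mul_ediv_cancel_left _ hp]
  rw [sq, ← extendByDiv_extendByDiv (by positivity), add_assoc (_ + _)]
  congr 1
  by_cases hn : (p : ℤ) ∣ n
  · obtain ⟨t, rfl⟩ := hn
    simp only [dvd_mul_right, if_true, Int.mul_ediv_cancel_left _ hp, extendByDiv,
      ite_and]
    split_ifs <;> rfl
  · simp [hn, extendByDiv_of_not_dvd]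

lemma sum_ite_sq_eq_intCast {p : ℕ} [Fact p.Prime] (hp2 : p ≠ 2) (a : ℤ) (w : ℂ) :
    ∑ x : ZMod p, (if x ^ 2 = a then w else 0) = (jacobiSym a p + 1) * w := by
  have hcard := legendreSym.card_sqrts p hp2 a
  rw [jacobiSym.legendreSym.to_jacobiSym] at hcard
  rw [← Finset.sum_filter, Finset.sum_const, nsmul_eq_mul]
  congr 1
  rw [← Int.cast_natCast, ← Int.cast_one, ← Int.cast_add, ← hcard]
  congr 3
  ext x
  simp

lemma sum_sub_mul_valMinAbs {M : Type*} [AddCommMonoid M] {p : ℕ} [Fact p.Prime] {a : ℤ}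
    (ha : (a : ZMod p) ≠ 0) (r : ℤ) (g : ZMod p → M) :
    ∑ l : ZMod p, g ((r - a * l.valMinAbs : ℤ) : ZMod p) = ∑ x, g x := by
  push_cast [ZMod.coe_valMinAbs]
  exact ((Equiv.mulLeft₀ _ ha).trans (Equiv.subLeft (r : ZMod p))).sum_comp g

section Prime

variable {m p : ℕ} {C : ℤ → ℤ → ℂ}

lemma isCoprime_four_mul (hpm : p.Coprime (2 * m)) : IsCoprime (p : ℤ) (4 * m) := by
  have h : p.Coprime (2 * (2 * m)) := (Nat.Coprime.coprime_mul_right_right hpm).mul_right hpm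
  have h4 : (4 * m : ℤ) = (2 * (2 * m) : ℕ) := by push_cast; ring
  rw [h4]
  exact Nat.isCoprime_iff_coprime.mpr h

lemma sq_intCast_eq_neg_iff (hpm : p.Coprime (2 * m)) {n s Δ : ℤ} (hΔ : Δ = 4 * m * n - s ^ 2) :
    (s : ZMod p) ^ 2 = (-Δ : ℤ) ↔ (p : ℤ) ∣ n := by
  have h : 4 * m * n = s ^ 2 - -Δ := by linarith
  rw [← Int.cast_pow, ← sub_eq_zero, ← Int.cast_sub, ← h, ZMod.intCast_zmod_eq_zero_iff_dvd]
  exact ⟨(isCoprime_four_mul hpm).dvd_of_dvd_mul_left, (Dvd.dvd.mul_left · _)⟩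

lemma four_mul_dvd_of_dvd_modInverse (hm : 0 < m) (hpm : p.Coprime (2 * m)) {t l : ℤ}
    (h : 4 * (m : ℤ) ∣ t + (modInverse m p * l) ^ 2) : 4 * (m : ℤ) ∣ p ^ 2 * t + l ^ 2 := by
  obtain ⟨a, ha⟩ := dvd_mul_modInverse_sub_one hm hpm
  obtain ⟨b, hb⟩ := h
  refine ⟨p ^ 2 * b - l ^ 2 * (a * (m * a + 1)), ?_⟩
  have hsq : ((p : ℤ) * modInverse m p) ^ 2 = (1 + 2 * m * a) ^ 2 := by rw [← ha]; ring
  linear_combination (p : ℤ) ^ 2 * hb - l ^ 2 * hsq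

namespace IsOptimalGrowthForm

lemma extendByDiv_sq (hC : IsOptimalGrowthForm m C) [NeZero p] (hm : 0 < m)
    (hpm : p.Coprime (2 * m)) {n u r : ℤ} (hr : 2 * (m : ℤ) ∣ p * u - r) :
    extendByDiv (p ^ 2) (fun t => toFourierCoeff m C (t, u)) n =
      extendByDiv (p ^ 2) (fun Δ => C Δ (modInverse m p * r)) (4 * m * n - (p * u) ^ 2) := by
  have hp0 : (p : ℤ) ^ 2 ≠ 0 := pow_ne_zero 2 (NeZero.ne _)
  by_cases hn : (p : ℤ) ^ 2 ∣ n
  · obtain ⟨t, rfl⟩ := hn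
    have hmul : 4 * m * (p ^ 2 * t) - (p * u) ^ 2 = (p : ℤ) ^ 2 * (4 * m * t - u ^ 2) := by ring
    rw [hmul, extendByDiv_mul_self hp0, extendByDiv_mul_self hp0]
    refine hC.eq_of_dvd_sub _ ?_
    have hinv : u - modInverse m p * r =
        modInverse m p * (p * u - r) - u * (p * modInverse m p - 1) := by ring
    rw [hinv]
    exact ((hr.mul_left _).sub ((dvd_mul_modInverse_sub_one hm hpm).mul_left _))
  · rw [extendByDiv_of_not_dvd hn, extendByDiv_of_not_dvd]
    rw [mul_pow, dvd_sub_left (dvd_mul_right _ _)]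
    exact mt (isCoprime_four_mul hpm).pow_left.dvd_of_dvd_mul_left hn

/-- With `Δ = 4mn - s²`, the divisibility conditions on `(n, s)` become conditions on `(Δ, s)`. -/
lemma heckeV_heckeV_apply (hC : IsOptimalGrowthForm m C) [NeZero p]
    (hm : 0 < m) (hpm : p.Coprime (2 * m)) {n s Δ r : ℤ} (hΔ : Δ = 4 * m * n - s ^ 2)
    (hr : 2 * (m : ℤ) ∣ s - r) :
    heckeV p (heckeV p (toFourierCoeff m C)) (n, p * s) =
      C (p ^ 2 * Δ) (p * r) + C Δ r + (if (s : ZMod p) ^ 2 = (-Δ : ℤ) then C Δ r else 0) +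
        if (s : ZMod p) = 0 then extendByDiv (p ^ 2) (fun D => C D (modInverse m p * r)) Δ
        else 0 := by
  have hp : (p : ℤ) ≠ 0 := NeZero.ne _
  have hs : toFourierCoeff m C (n, s) = C Δ r := by
    rw [hΔ, ← hC.eq_of_dvd_sub _ hr, toFourierCoeff]
  have hps : toFourierCoeff m C (p * (p * n), p * s) = C (p ^ 2 * Δ) (p * r) := by
    have hdvd : 2 * (m : ℤ) ∣ p * s - p * r := by simpa only [mul_sub] using hr.mul_left (p : ℤ)
    have hdisc : 4 * (m : ℤ) * (p * (p * n)) - (p * s) ^ 2 = p ^ 2 * Δ := by rw [hΔ]; ring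
    simp only [toFourierCoeff, hdisc, hC.eq_of_dvd_sub _ hdvd]
  rw [heckeV_heckeV_mul_snd, hs, hps]
  congr 1
  · congr 1
    exact if_congr (sq_intCast_eq_neg_iff hpm hΔ).symm rfl rfl
  · refine if_ctx_congr (ZMod.intCast_zmod_eq_zero_iff_dvd s p).symm (fun hdvd => ?_) fun _ => rfl
    rw [ZMod.intCast_zmod_eq_zero_iff_dvd] at hdvd
    obtain ⟨u, rfl⟩ := hdvd
    rw [Int.mul_ediv_cancel_left _ hp, hC.extendByDiv_sq hm hpm hr, hΔ]

theorem heckeW_heckeV_heckeV (hC : IsOptimalGrowthForm m C) [Fact p.Prime] (hm : 0 < m)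
    (hpm : p.Coprime (2 * m)) :
    heckeW m p (heckeV p (heckeV p (toFourierCoeff m C))) =
      toFourierCoeff m (heckeT m p C) + ((p : ℂ) + 1) • toFourierCoeff m C := by
  have hp2 : p ≠ 2 := by
    rintro rfl
    simp [Nat.coprime_mul_iff_right] at hpm
  have h2m : ((2 * m : ℤ) : ZMod p) ≠ 0 := by
    have := (ZMod.isUnit_iff_coprime (2 * m) p).mpr hpm.symm
    exact_mod_cast this.ne_zero
  funext ⟨n, r⟩
  have hterm (l : ZMod p) := hC.heckeV_heckeV_apply hm hpm
    (n := n - r * l.valMinAbs + m * l.valMinAbs ^ 2) (s := r - 2 * m * l.valMinAbs)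
    (Δ := 4 * m * n - r ^ 2) (r := r) (by ring) ⟨-l.valMinAbs, by ring⟩
  simp only [heckeW, hterm, Finset.sum_add_distrib]
  rw [sum_sub_mul_valMinAbs h2m r fun x => if x ^ 2 = _ then _ else _,
    sum_sub_mul_valMinAbs h2m r fun x => if x = 0 then _ else _, sum_ite_sq_eq_intCast hp2]
  simp only [Finset.sum_const, Finset.sum_ite_eq', Finset.mem_univ, if_true, Finset.card_univ,
    ZMod.card, nsmul_eq_mul, Pi.add_apply, Pi.smul_apply, toFourierCoeff, heckeT_apply,
    smul_eq_mul]
  ring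

end IsOptimalGrowthForm

lemma heckeT_mem_holomorphicForms [Fact p.Prime] (hm : 0 < m) (hpm : p.Coprime (2 * m))
    (hC : C ∈ holomorphicForms m) : heckeT m p C ∈ holomorphicForms m := by
  obtain ⟨hC, hhol⟩ := hC
  have hp0 : 0 < (p : ℤ) ^ 2 := pow_pos (by exact_mod_cast NeZero.pos p) 2
  have hodd : Odd p := (Nat.Coprime.coprime_mul_right_right hpm).symm.odd_of_left
  have hholT : IsHolC (heckeT m p C) := by
    intro Δ l h
    have hmul : (p : ℤ) ^ 2 * Δ < 0 := mul_neg_of_pos_of_neg hp0 h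
    simp [heckeT_apply, extendByDiv, hhol _ _ hmul, hhol _ _ h,
      hhol _ _ (Int.ediv_neg_of_neg_of_pos h hp0)]
  refine ⟨⟨fun Δ l => ?_, fun Δ l h => ?_, fun Δ l h => hholT _ _ (by lia), ?_⟩, hholT⟩
  · simp only [heckeT_apply]
    rw [hC.periodic, hC.eq_of_dvd_sub (l := p * (l + 2 * m)) (l' := p * l) _ ⟨p, by ring⟩]
    simp only [hC.eq_of_dvd_sub (l := modInverse m p * (l + 2 * m)) (l' := modInverse m p * l) _
      ⟨modInverse m p, by ring⟩]
  · have hmul : ¬ 4 * (m : ℤ) ∣ p ^ 2 * Δ + (p * l) ^ 2 := by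
      rw [mul_pow, ← mul_add]
      exact mt (isCoprime_four_mul hpm).symm.pow_right.dvd_of_dvd_mul_left h
    have hdiv : extendByDiv (p ^ 2) (fun D => C D (modInverse m p * l)) Δ = 0 := by
      by_cases hΔ : (p : ℤ) ^ 2 ∣ Δ
      · obtain ⟨t, rfl⟩ := hΔ
        rw [extendByDiv_mul_self hp0.ne', hC.support]
        exact mt (four_mul_dvd_of_dvd_modInverse hm hpm) h
      · exact extendByDiv_of_not_dvd hΔ _
    rw [heckeT_apply, hC.support _ _ h, hC.support _ _ hmul, hdiv]
    simp
  · have hWVV : IsWeightOneSeries m (heckeW m p (heckeV p (heckeV p (toFourierCoeff m C)))) := by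
      refine IsWeightOneSeries.heckeW hodd ?_
      simpa only [sq, mul_assoc] using hC.series.heckeV.heckeV (p := p)
    have hT : toFourierCoeff m (heckeT m p C) =
        heckeW m p (heckeV p (heckeV p (toFourierCoeff m C))) +
          (-((p : ℂ) + 1)) • toFourierCoeff m C := by
      rw [hC.heckeW_heckeV_heckeV hm hpm]
      module
    rw [hT]
    exact hWVV.add (hC.series.const_smul _)

end Prime

lemma exists_common_eigenvector {K V ι : Type*} [Field K] [IsAlgClosed K] [AddCommGroup V]
    [Module K V] [FiniteDimensional K V] [Nontrivial V] (f : ι → Module.End K V)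
    (hf : ∀ i j, Commute (f i) (f j)) : ∃ v ≠ 0, ∀ i, ∃ μ : K, f i v = μ • v := by
  induction hd : Module.finrank K V using Nat.strong_induction_on generalizing V with
  | _ d ih =>
  choose μ hμ using fun i => Module.End.exists_eigenvalue (f i)
  by_cases htop : ∀ i, (f i).eigenspace (μ i) = ⊤
  · obtain ⟨v, hv⟩ := exists_ne (0 : V)
    exact ⟨v, hv, fun i => ⟨μ i, Module.End.mem_eigenspace_iff.mp (htop i ▸ Submodule.mem_top)⟩⟩
  · push Not at htop
    obtain ⟨i, hi⟩ := htop
    set E := (f i).eigenspace (μ i)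
    have hmaps (j : ι) : ∀ v ∈ E, f j v ∈ E := Module.End.mapsTo_genEigenspace_of_comm (hf i j) _ _
    have : Nontrivial E := Submodule.nontrivial_iff_ne_bot.mpr (hμ i)
    obtain ⟨v, hv, hmem⟩ := ih _ (hd ▸ Submodule.finrank_lt hi) (V := E)
      (fun j => (f j).restrict (hmaps j))
      (fun j k => LinearMap.ext fun v => Subtype.ext <| LinearMap.congr_fun (hf j k) v) rfl
    refine ⟨v, by simpa using hv, fun j => ?_⟩
    obtain ⟨ν, hν⟩ := hmem j
    exact ⟨ν, congrArg Subtype.val hν⟩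

lemma exists_common_heckeT_eigenform {m : ℕ} (hm : 0 < m)
    [FiniteDimensional ℂ (holomorphicForms m)] (hne : holomorphicForms m ≠ ⊥) :
    ∃ C ∈ holomorphicForms m, C ≠ 0 ∧
      ∀ p : ℕ, p.Prime → p.Coprime (2 * m) → ∃ ν : ℂ, heckeT m p C = ν • C := by
  have : Nontrivial (holomorphicForms m) := Submodule.nontrivial_iff_ne_bot.mpr hne
  obtain ⟨C, hC, heigen⟩ := exists_common_eigenvector
    (fun p : {p : ℕ // p.Prime ∧ p.Coprime (2 * m)} =>
      (heckeT m p).restrict fun C hC =>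
        have : Fact p.1.Prime := ⟨p.2.1⟩
        heckeT_mem_holomorphicForms hm p.2.2 hC)
    fun p q => LinearMap.ext fun C => Subtype.ext <|
      LinearMap.congr_fun (commute_heckeT m p.2.1 q.2.1) C.1
  refine ⟨C, C.2, by simpa using hC, fun p hp hpm => ?_⟩
  obtain ⟨ν, hν⟩ := heigen ⟨p, hp, hpm⟩
  exact ⟨ν, congrArg Subtype.val hν⟩

/-! ### Nonarchimedean absolute values on `ℂ` -/

section Nonarchimedean

open Cardinal in
theorem cardinalMk_padicAlgCl (p : ℕ) [Fact p.Prime] : #(PadicAlgCl p) = 𝔠 := by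
  have hle : #ℚ_[p] ≤ 𝔠 := calc
    #ℚ_[p] ≤ #(CauSeq ℚ (padicNorm p)) := mk_quotient_le
    _ ≤ #(ℕ → ℚ) := mk_subtype_le _
    _ = 𝔠 := by simp
  exact le_antisymm
    ((Algebra.IsAlgebraic.cardinalMk_le_max ℚ_[p] _).trans (max_le hle aleph0_le_continuum))
    ((continuum_le_cardinal_of_nontriviallyNormedField ℚ_[p]).trans
      (mk_le_of_injective (FaithfulSMul.algebraMap_injective ℚ_[p] _)))

theorem nonempty_complex_ringEquiv_padicAlgCl (p : ℕ) [Fact p.Prime] :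
    Nonempty (ℂ ≃+* PadicAlgCl p) := by
  have : IsAlgClosed (PadicAlgCl p) := by unfold PadicAlgCl; infer_instance
  refine IsAlgClosed.ringEquiv_of_equiv_of_charZero ?_ ?_
  · rw [Cardinal.mk_complex]
    exact Cardinal.aleph0_lt_continuum
  · rw [← Cardinal.eq, cardinalMk_padicAlgCl, Cardinal.mk_complex]

theorem exists_isNonarchimedean_absoluteValue_lt_one {p : ℕ} (hp : p.Prime) :
    ∃ N : AbsoluteValue ℂ ℝ, IsNonarchimedean N ∧ N p < 1 := by
  have : Fact p.Prime := ⟨hp⟩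
  obtain ⟨e⟩ := nonempty_complex_ringEquiv_padicAlgCl p
  refine ⟨(NormedField.toAbsoluteValue (PadicAlgCl p)).comp (f := (e : ℂ →+* PadicAlgCl p))
    e.injective, fun x y => ?_, ?_⟩
  · change ‖e (x + y)‖ ≤ max ‖e x‖ ‖e y‖
    rw [map_add]
    exact PadicAlgCl.isNonarchimedean p (e x) (e y)
  · have hnorm : ‖(p : PadicAlgCl p)‖ = ‖(p : ℚ_[p])‖ := by
      rw [← PadicAlgCl.norm_extends, map_natCast]
    change ‖e p‖ < 1
    rw [map_natCast, hnorm]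
    exact Padic.norm_p_lt_one

variable {N : AbsoluteValue ℂ ℝ}

theorem apply_intCast_eq_one_of_not_dvd (hN : IsNonarchimedean N) {p : ℕ} (hp : p.Prime)
    (hNp : N p < 1) {n : ℤ} (hn : ¬(p : ℤ) ∣ n) : N n = 1 := by
  refine le_antisymm hN.apply_intCast_le_one (not_lt.1 fun hlt => ?_)
  obtain ⟨a, b, hab⟩ :=
    (Prime.coprime_iff_not_dvd (Nat.prime_iff_prime_int.1 hp)).2 hn
  have hmul : ∀ (c : ℤ) {x : ℂ}, N x < 1 → N (c * x) < 1 := fun c x hx => by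
    rw [map_mul]
    exact mul_lt_one_of_nonneg_of_lt_one_right hN.apply_intCast_le_one (N.nonneg _) hx
  have hsum : N (a * (p : ℂ) + b * n) < 1 :=
    (hN _ _).trans_lt (max_lt (hmul a hNp) (hmul b hlt))
  rw [show a * (p : ℂ) + b * n = 1 by exact_mod_cast hab, map_one] at hsum
  exact hsum.false

theorem apply_sum_le_of_forall_le (hN : IsNonarchimedean N) {ι : Type*} {s : Finset ι}
    {f : ι → ℂ} {B : ℝ} (hB : 0 ≤ B) (hf : ∀ i ∈ s, N (f i) ≤ B) : N (∑ i ∈ s, f i) ≤ B :=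
  hN.apply_sum_le.trans (Real.iSup_le (fun i => hf i i.2) hB)

/-- The power series whose coefficients are bounded for a nonarchimedean absolute value. -/
def boundedSeries (hN : IsNonarchimedean N) : Subalgebra ℂ (PowerSeries ℂ) where
  carrier := {P | ∃ B, ∀ n, N (P.coeff n) ≤ B}
  add_mem' := by
    rintro P Q ⟨B, hB⟩ ⟨D, hD⟩
    exact ⟨max B D, fun n => by rw [map_add]; exact (hN _ _).trans (max_le_max (hB n) (hD n))⟩
  mul_mem' := by
    rintro P Q ⟨B, hB⟩ ⟨D, hD⟩
    have hB0 : 0 ≤ B := (N.nonneg _).trans (hB 0)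
    refine ⟨B * D, fun n => ?_⟩
    rw [PowerSeries.coeff_mul]
    refine apply_sum_le_of_forall_le hN (mul_nonneg hB0 ((N.nonneg _).trans (hD 0)))
      fun x _ => ?_
    rw [map_mul]
    exact mul_le_mul (hB _) (hD _) (N.nonneg _) hB0
  algebraMap_mem' a := ⟨N a, fun n => by
    rw [PowerSeries.algebraMap_apply, Algebra.algebraMap_self, RingHom.id_apply,
      PowerSeries.coeff_C]
    split_ifs <;> simp⟩

end Nonarchimedean

/-! ### Level-one modular forms -/

section LevelOne

open UpperHalfPlane hiding I I_im
open ModularForm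
open scoped MatrixGroups

/-- The functions on the upper half plane given by a power series in `e^{2πiτ}`, paired with that
series. -/
def qSeries : Subalgebra ℂ ((ℍ → ℂ) × PowerSeries ℂ) where
  carrier := {x | ∀ τ : ℍ, HasSum (fun n : ℕ => x.2.coeff n * ee (n * τ)) (x.1 τ)}
  add_mem' hx hy τ := ((hx τ).add (hy τ)).congr_fun fun n => by simp [add_mul]
  mul_mem' := by
    rintro ⟨f, P⟩ ⟨g, Q⟩ hf hg τ
    have hsf := (hf τ).summable.norm
    have hsg := (hg τ).summable.norm
    have hprod := tsum_mul_tsum_eq_tsum_sum_antidiagonal_of_summable_norm hsf hsg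
    rw [(hf τ).tsum_eq, (hg τ).tsum_eq] at hprod
    simp only [Prod.mk_mul_mk, Pi.mul_apply]
    rw [hprod]
    refine (summable_norm_sum_mul_antidiagonal_of_summable_norm hsf hsg).of_norm.hasSum.congr_fun
      fun n => ?_
    rw [PowerSeries.coeff_mul, Finset.sum_mul]
    refine Finset.sum_congr rfl fun x hx => ?_
    rw [← Finset.HasAntidiagonal.mem_antidiagonal.1 hx, Nat.cast_add, add_mul, ee_add]
    ring
  algebraMap_mem' a τ := (hasSum_ite_eq 0 a).congr_fun fun n => by
    rcases eq_or_ne n 0 with rfl | hn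
    · simp [ee_zero]
    · simp [hn, PowerSeries.coeff_C]

theorem qParam_one_pow (τ : ℂ) (n : ℕ) : Function.Periodic.qParam 1 τ ^ n = ee (n * τ) := by
  rw [ee_natCast_mul]
  simp [Function.Periodic.qParam, ee]

variable {f : ℍ → ℂ} {P : PowerSeries ℂ}

theorem hasSum_qParam_of_mem_qSeries (hf : (f, P) ∈ qSeries) (τ : ℍ) :
    HasSum (fun n : ℕ => P.coeff n • Function.Periodic.qParam 1 (τ : ℂ) ^ n) (f τ) :=
  (hf τ).congr_fun fun n => by rw [smul_eq_mul, qParam_one_pow]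

theorem vadd_of_mem_qSeries (hf : (f, P) ∈ qSeries) (n : ℤ) (τ : ℍ) :
    f ((n : ℝ) +ᵥ τ) = f τ :=
  (hf _).unique <| (hf τ).congr_fun fun k => by
    rw [ee_eq_of_eq_add_intCast (x := k * (((n : ℝ) +ᵥ τ : ℍ) : ℂ)) (y := k * (τ : ℂ)) (k * n)]
    push_cast [coe_vadd]
    ring

theorem mdifferentiable_of_mem_qSeries (hf : (f, P) ∈ qSeries) :
    MDifferentiable (modelWithCornersSelf ℂ ℂ) (modelWithCornersSelf ℂ ℂ) f := by
  rw [mdifferentiable_iff]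
  intro z (hz : 0 < z.im)
  let U : Set ℂ := {w | z.im / 2 < w.im}
  have hU : IsOpen U := isOpen_lt continuous_const continuous_im
  have hzU : U ∈ 𝓝 z := hU.mem_nhds (half_lt_self hz)
  let w₀ : ℍ := ⟨((z.im / 2 : ℝ) : ℂ) * I, by simpa using hz⟩
  have hd : DifferentiableOn ℂ (fun w => ∑' n : ℕ, P.coeff n * ee (n * w)) U := by
    refine differentiableOn_tsum_of_summable_norm (hf w₀).summable.norm
      (fun n => ((differentiable_ee.comp (differentiable_id.const_mul _)).const_mul
        _).differentiableOn) hU fun n w (hw : z.im / 2 < w.im) => ?_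
    rw [norm_mul, norm_mul, norm_ee, norm_ee]
    gcongr ‖_‖ * Real.exp ?_
    have hle : (n : ℝ) * (z.im / 2) ≤ n * w.im := by gcongr
    have him : ∀ v : ℂ, ((n : ℂ) * v).im = n * v.im := fun v => by simp
    simp only [him, w₀, im_ofReal_mul, I_im, mul_one]
    nlinarith [Real.pi_pos]
  refine ((hd.differentiableAt hzU).congr_of_eventuallyEq ?_).differentiableWithinAt
  filter_upwards [hzU] with w (hw : z.im / 2 < w.im)
  have hw0 : 0 < w.im := (half_pos hz).trans hw
  rw [Function.comp_apply, ofComplex_apply_of_im_pos hw0]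
  exact (hf ⟨w, hw0⟩).tsum_eq.symm

theorem exists_modularForm_coe_eq {k : ℤ} (hf : (f, P) ∈ qSeries)
    (hS : ∀ τ : ℍ, f (ModularGroup.S • τ) = (τ : ℂ) ^ k * f τ) :
    ∃ F : ModularForm 𝒮ℒ k, ⇑F = f := by
  have hslash : ∀ γ : SL(2, ℤ), f ∣[k] γ = f := by
    apply SlashInvariantForm.slash_action_generators_SL2Z
    · ext τ
      rw [SL_slash_apply, hS, ModularGroup.denom_S, mul_right_comm, ← zpow_add₀ (ne_zero τ)]
      simp
    · ext τ
      rw [SL_slash_apply, modular_T_smul, ← Int.cast_one, vadd_of_mem_qSeries hf]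
      simp [ModularGroup.denom_apply, ModularGroup.coe_T]
  refine ⟨{ toFun := f, slash_action_eq' := ?_, holo' := mdifferentiable_of_mem_qSeries hf,
            bdd_at_cusps' := fun {c} hc => ?_ }, rfl⟩
  · rintro _ ⟨γ, rfl⟩
    exact hslash γ
  · rw [OnePoint.isBoundedAt_iff_forall_SL2Z (by simpa using hc)]
    intro γ _
    rw [hslash γ]
    exact isBoundedAtImInfty_of_hasSum_qExpansion one_pos (hasSum_qParam_of_mem_qSeries hf)

theorem qExpansion_eq_of_mem_qSeries {k : ℤ} {F : ModularForm 𝒮ℒ k} (hF : (⇑F, P) ∈ qSeries) :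
    qExpansion 1 F = P := by
  ext n
  exact (ModularFormClass.qExpansion_coeff_unique one_pos one_mem_strictPeriods_SL
    (hasSum_qParam_of_mem_qSeries hF) n).symm

theorem eq_zero_of_weight_two (hf : (f, P) ∈ qSeries)
    (hS : ∀ τ : ℍ, f (ModularGroup.S • τ) = (τ : ℂ) ^ (2 : ℤ) * f τ) : P = 0 := by
  obtain ⟨F, rfl⟩ := exists_modularForm_coe_eq hf hS
  have hF : F = 0 := rank_zero_iff_forall_zero.1 levelOne_weight_two_rank_zero F
  rw [← qExpansion_eq_of_mem_qSeries hf, hF]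
  exact qExpansion_zero 1

variable {N : AbsoluteValue ℂ ℝ} (hN : IsNonarchimedean N)

theorem qExpansion_E_mem_boundedSeries {k : ℕ} (hk : 3 ≤ k) (hk2 : Even k) :
    qExpansion 1 (E hk) ∈ boundedSeries hN := by
  refine ⟨max 1 (N (-(2 * k / bernoulli k))), fun n => ?_⟩
  rw [EisensteinSeries.E_qExpansion_coeff hk hk2]
  split_ifs
  · simp
  · rw [map_mul]
    exact le_max_of_le_right (mul_le_of_le_one_right (N.nonneg _) hN.apply_natCast_le_one)

theorem qExpansion_discriminant_mem_boundedSeries :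
    qExpansion 1 discriminant ∈ boundedSeries hN := by
  have h4 := qExpansion_E_mem_boundedSeries hN (k := 4) (by lia) (by decide)
  have h6 := qExpansion_E_mem_boundedSeries hN (k := 6) (by lia) (by decide)
  have hdisc : (1728 : ℂ) • qExpansion 1 discriminant =
      qExpansion 1 E₄ ^ 3 - qExpansion 1 E₆ ^ 2 := by
    have h := congrArg (qExpansionRingHom 1 one_pos one_mem_strictPeriods_SL)
      (congrArg ((1728 : ℂ) • ·) discriminant_eq_E₄_cube_sub_E₆_sq_graded)
    simp only [smul_smul] at h
    rw [show (1728 : ℂ) * (1 / 1728) = 1 by norm_num, one_smul, map_sub, map_pow, map_pow,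
      ← DirectSum.of_smul] at h
    simp only [qExpansionRingHom_apply] at h
    rw [← h]
    exact (ModularForm.qExpansion_smul one_pos one_mem_strictPeriods_SL _
      CuspForm.discriminant).symm
  rw [← inv_smul_smul₀ (by norm_num : (1728 : ℂ) ≠ 0) (qExpansion 1 discriminant), hdisc]
  exact Subalgebra.smul_mem _ (sub_mem (pow_mem h4 3) (pow_mem h6 2)) _

theorem qExpansion_mem_boundedSeries {k : ℤ} (f : ModularForm 𝒮ℒ k) :
    qExpansion 1 f ∈ boundedSeries hN := by
  induction hn : k.toNat using Nat.strong_induction_on generalizing k with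
  | _ n ih =>
  rcases lt_trichotomy k 0 with hneg | rfl | hpos
  · rw [ModularFormClass.levelOne_neg_weight_eq_zero hneg f, qExpansion_zero]
    exact zero_mem _
  · obtain ⟨c, hc⟩ := ModularFormClass.levelOne_weight_zero_const f
    have hmem : (⇑f, algebraMap ℂ (PowerSeries ℂ) c) ∈ qSeries := by
      rw [hc]
      exact qSeries.algebraMap_mem c
    rw [qExpansion_eq_of_mem_qSeries hmem]
    exact Subalgebra.algebraMap_mem _ c
  lift k to ℕ using hpos.le
  rcases Nat.even_or_odd k with heven | hodd
  swap
  · rw [levelOne_odd_weight_eq_zero (mod_cast hodd) f, FunLike.coe_zero, qExpansion_zero]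
    exact zero_mem _
  rcases lt_or_ge k 3 with hlt | hk
  · obtain rfl : k = 2 := by obtain ⟨j, rfl⟩ := heven; lia
    rw [rank_zero_iff_forall_zero.1 levelOne_weight_two_rank_zero f, FunLike.coe_zero,
      qExpansion_zero]
    exact zero_mem _
  -- Subtracting a multiple of `E_k` leaves a cusp form, which is divisible by the discriminant.
  let a := (qExpansion 1 f).coeff 0
  let g : ModularForm 𝒮ℒ (k : ℤ) := f - a • E hk
  have hfg : qExpansion 1 f = qExpansion 1 g + a • qExpansion 1 (E hk) := by
    rw [← ModularForm.qExpansion_smul one_pos one_mem_strictPeriods_SL a (E hk)]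
    exact sub_eq_iff_eq_add.1
      (ModularForm.qExpansion_sub one_pos one_mem_strictPeriods_SL f (a • E hk)).symm
  have hg : (qExpansion 1 g).coeff 0 = 0 := by
    rw [eq_sub_of_add_eq hfg.symm, map_sub, map_smul, EisensteinSeries.E_qExpansion_coeff hk heven]
    simp [a]
  rw [hfg, qExpansion_eq_qExpansion_discriminant_mul g hg]
  exact add_mem (mul_mem (qExpansion_discriminant_mem_boundedSeries hN) (ih _ (by lia) _ rfl))
    (Subalgebra.smul_mem _ (qExpansion_E_mem_boundedSeries hN hk heven) _)

theorem mem_boundedSeries_of_mem_qSeries {k : ℤ} (hf : (f, P) ∈ qSeries)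
    (hS : ∀ τ : ℍ, f (ModularGroup.S • τ) = (τ : ℂ) ^ k * f τ) : P ∈ boundedSeries hN := by
  obtain ⟨F, rfl⟩ := exists_modularForm_coe_eq hf hS
  rw [← qExpansion_eq_of_mem_qSeries hf]
  exact qExpansion_mem_boundedSeries hN F

/-- The Fourier expansion `1 - 24 ∑ σ₁(n) qⁿ` of the quasimodular Eisenstein series `E₂`. -/
def seriesE2 : PowerSeries ℂ :=
  PowerSeries.mk fun n => if n = 0 then 1 else -24 * (ArithmeticFunction.sigma 1 n : ℂ)

theorem E2_mem_qSeries : (EisensteinSeries.E2, seriesE2) ∈ qSeries := fun τ =>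
  (EisensteinSeries.hasSum_qExpansion_E2 (z := τ)).congr_fun fun n => by
    rw [smul_eq_mul, seriesE2, PowerSeries.coeff_mk, ee_natCast_mul, ee]

theorem seriesE2_mem_boundedSeries : seriesE2 ∈ boundedSeries hN := by
  refine ⟨1, fun n => ?_⟩
  rw [seriesE2, PowerSeries.coeff_mk]
  split_ifs
  · simp
  · exact_mod_cast hN.apply_intCast_le_one (n := -24 * (ArithmeticFunction.sigma 1 n : ℤ))

theorem E2_S_smul (τ : ℍ) : EisensteinSeries.E2 (ModularGroup.S • τ) =
    (τ : ℂ) ^ 2 * EisensteinSeries.E2 τ - 6 * I / Real.pi * τ := by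
  have h := congrFun (EisensteinSeries.E2_slash_action ModularGroup.S) τ
  rw [SL_slash_apply, ModularGroup.denom_S, zpow_neg, zpow_ofNat, Pi.sub_apply, Pi.smul_apply,
    EisensteinSeries.D2_S, riemannZeta_two, smul_eq_mul] at h
  have hτ : (τ : ℂ) ≠ 0 := ne_zero τ
  rw [mul_inv_eq_iff_eq_mul₀ (pow_ne_zero 2 hτ)] at h
  rw [h]
  have hpi : (Real.pi : ℂ) ≠ 0 := ofReal_ne_zero.2 Real.pi_ne_zero
  field_simp

end LevelOne

/-! ### Theta decomposition -/

section theta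

variable {m : ℕ} [NeZero m] {τ : ℂ}

lemma summable_theta (hτ : 0 < τ.im) (z : ℂ) :
    Summable fun n : ℤ => ee (n ^ 2 / (4 * m) * τ + n * z) := by
  have hτm : 0 < (τ / (2 * m)).im := by
    simpa using im_add_intCast_div_pos hτ (p := 2 * m) (Nat.pos_of_neZero _) 0
  refine ((summable_jacobiTheta₂_term_iff z _).mpr hτm).congr fun n => ?_
  rw [jacobiTheta₂_term, ee]
  congr 1
  field_simp [NeZero.ne m]
  ring

lemma hasSum_mul_theta (Φ : ZMod (2 * m) → ℂ) (hτ : 0 < τ.im) (z : ℂ) :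
    HasSum (fun r : ℤ => Φ r * ee (r ^ 2 / (4 * m) * τ + r * z))
      (∑ l, Φ l * jTheta m l.cast τ z) := by
  have hclass (l : ZMod (2 * m)) :
      HasSum (fun r : ℤ => if (r : ZMod (2 * m)) = l then ee (r ^ 2 / (4 * m) * τ + r * z) else 0)
        (jTheta m l.cast τ z) := by
    have hinj : Function.Injective fun n : ℤ => (l.cast + 2 * m * n : ℤ) := fun a b hab => by
      simpa [NeZero.ne m] using hab
    have hmem (n : ℤ) : ((l.cast + 2 * m * n : ℤ) : ZMod (2 * m)) = l := by
      have : (2 * m : ZMod (2 * m)) = 0 := by exact_mod_cast ZMod.natCast_self (2 * m)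
      simp [this]
    rw [← hinj.hasSum_iff]
    · have hsum := ((summable_theta (m := m) hτ z).comp_injective hinj).hasSum
      simp only [Function.comp_def] at hsum ⊢
      simpa only [hmem, if_true, jTheta, Int.cast_add, Int.cast_mul, Int.cast_ofNat,
        Int.cast_natCast] using hsum
    · intro r hr
      refine if_neg fun hrl => hr ?_
      obtain ⟨k, hk⟩ : ((2 * m : ℕ) : ℤ) ∣ r - l.cast := by
        rw [← ZMod.intCast_zmod_eq_zero_iff_dvd, Int.cast_sub, hrl, ZMod.intCast_zmod_cast,
          sub_self]
      exact ⟨k, by push_cast at hk ⊢; linarith⟩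
  refine (hasSum_sum fun l _ => (hclass l).mul_left (Φ l)).congr_fun fun r => ?_
  simp

/-- The automorphy factor of the theta decomposition under `S`: the principal branch of
`(-I τ / 2m) ^ (1/2)`, divided by `τ`. -/
def thetaFactor (m : ℕ) (τ : ℂ) : ℂ := (-I * (τ / (2 * m))) ^ (1 / 2 : ℂ) / τ

omit [NeZero m] in
lemma thetaFactor_sq (hτ : 0 < τ.im) : thetaFactor m τ ^ 2 = -I / (2 * m * τ) := by
  have hτ0 := ne_zero_of_im_pos hτ
  rw [thetaFactor, div_pow, ← Complex.cpow_nat_mul]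
  norm_num
  field_simp

lemma thetaFactor_ne_zero (hτ : 0 < τ.im) : thetaFactor m τ ≠ 0 := by
  refine pow_ne_zero_iff two_ne_zero |>.mp ?_
  rw [thetaFactor_sq hτ]
  simp [NeZero.ne m, ne_zero_of_im_pos hτ]

lemma continuousOn_thetaFactor : ContinuousOn (thetaFactor m) {τ | 0 < τ.im} := by
  refine ContinuousOn.div (ContinuousOn.cpow_const (by fun_prop) fun τ hτ => ?_) continuousOn_id
    fun τ hτ => ne_zero_of_im_pos hτ
  refine Or.inl ?_
  have : (-I * (τ / (2 * m))).re = τ.im / (2 * m) := by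
    rw [← mul_div_assoc, show (2 * m : ℂ) = (2 * m : ℕ) by push_cast; rfl, Complex.div_natCast_re]
    simp
  rw [this]
  have := Nat.pos_of_neZero m
  exact div_pos hτ (by positivity)

omit [NeZero m] in
lemma thetaFactor_neg_one_div_sq (hτ : 0 < τ.im) :
    thetaFactor m (-1 / τ) ^ 2 = I / (2 * m) * τ := by
  rw [thetaFactor_sq (im_neg_one_div_pos hτ)]
  field_simp [ne_zero_of_im_pos hτ]

lemma continuousOn_neg_one_div {g : ℂ → ℂ} (hg : ContinuousOn g {τ | 0 < τ.im})
    (hg' : ∀ τ : ℂ, 0 < τ.im → 0 < (g τ).im) :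
    ContinuousOn (fun τ => -1 / g τ) {τ | 0 < τ.im} :=
  continuousOn_const.div hg fun τ hτ => ne_zero_of_im_pos (hg' τ hτ)

lemma im_add_one_div_natCast_pos {p : ℕ} (hτ : 0 < τ.im) : 0 < (τ + 1 / p).im := by
  simpa [← Complex.ofReal_natCast, ← Complex.ofReal_inv] using hτ

lemma neg_one_div_add_mul_mul {p : ℕ} [NeZero p] (hτ : 0 < τ.im) :
    (-1 / (-1 / τ + 1 / p) + p) * ((-1 / τ + 1 / p) * τ) = -p := by
  have hw := ne_zero_of_im_pos (im_add_one_div_natCast_pos (p := p) (im_neg_one_div_pos hτ))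
  rw [← mul_assoc, add_mul, div_mul_cancel₀ _ hw]
  field_simp [ne_zero_of_im_pos hτ, NeZero.ne p]
  ring

lemma exists_thetaFactor_prod_eq (m p : ℕ) [NeZero m] [NeZero p] :
    ∃ c : ℂ, ∀ τ : ℂ, 0 < τ.im →
      thetaFactor m (-1 / (-1 / (-1 / τ + 1 / p) + p)) *
        (thetaFactor m (-1 / (-1 / τ + 1 / p)) * thetaFactor m (-1 / τ)) = c := by
  have him₁ {τ : ℂ} (hτ : 0 < τ.im) : 0 < (-1 / τ + 1 / p).im :=
    im_add_one_div_natCast_pos (im_neg_one_div_pos hτ)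
  have him₂ {τ : ℂ} (hτ : 0 < τ.im) : 0 < (-1 / (-1 / τ + 1 / p) + p).im := by
    simpa only [add_im, natCast_im, add_zero] using im_neg_one_div_pos (him₁ hτ)
  set f : ℂ → ℂ := fun τ => thetaFactor m (-1 / (-1 / (-1 / τ + 1 / p) + p)) *
    (thetaFactor m (-1 / (-1 / τ + 1 / p)) * thetaFactor m (-1 / τ)) with hf
  have hsq {τ : ℂ} (hτ : 0 < τ.im) : f τ ^ 2 = (I / (2 * m)) ^ 3 * -p := by
    rw [hf, mul_pow, mul_pow, thetaFactor_neg_one_div_sq hτ, thetaFactor_neg_one_div_sq (him₁ hτ),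
      thetaFactor_neg_one_div_sq (him₂ hτ), ← neg_one_div_add_mul_mul hτ]
    ring
  have hcont : ContinuousOn f {τ | 0 < τ.im} := by
    have h₀ := continuousOn_neg_one_div continuousOn_id fun τ hτ => hτ
    have h₁ := continuousOn_neg_one_div (h₀.add continuousOn_const) fun τ hτ => him₁ hτ
    have h₂ := continuousOn_neg_one_div (h₁.add continuousOn_const) fun τ hτ => him₂ hτ
    exact (continuousOn_thetaFactor.comp h₂ fun τ hτ => im_neg_one_div_pos (him₂ hτ)).mul
      ((continuousOn_thetaFactor.comp h₁ fun τ hτ => im_neg_one_div_pos (him₁ hτ)).mul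
      (continuousOn_thetaFactor.comp h₀ fun τ hτ => im_neg_one_div_pos hτ))
  have hI : 0 < I.im := by simp
  refine ⟨f I, fun τ hτ => (convex_halfSpace_im_gt 0).isPreconnected.eq_of_sq_eq (y := I) hcont
    continuousOn_const (fun τ hτ => ?_) (fun _ => ?_) hI rfl hτ⟩
  · simp only [Pi.pow_apply, hsq hτ, hsq hI]
  · refine pow_ne_zero_iff two_ne_zero |>.mp ?_
    rw [hsq hI]
    simp [NeZero.ne m, NeZero.ne p]

lemma jTheta_neg_one_div (l : ℤ) (hτ : 0 < τ.im) (z : ℂ) :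
    jTheta m l (-1 / τ) (z / τ) = τ * thetaFactor m τ * ee (m * z ^ 2 / τ) *
      jacobiTheta₂ (z - l / (2 * m)) (τ / (2 * m)) := by
  have hm : (m : ℂ) ≠ 0 := NeZero.ne _
  have hτ0 := ne_zero_of_im_pos hτ
  have htheta : jTheta m l (-1 / τ) (z / τ) = ee (-l ^ 2 / (4 * m * τ) + l * z / τ) *
      jacobiTheta₂ ((z - l / (2 * m)) / (τ / (2 * m))) (-1 / (τ / (2 * m))) := by
    rw [jTheta, jacobiTheta₂, ← tsum_mul_left]
    refine tsum_congr fun n => ?_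
    rw [jacobiTheta₂_term, ee, ee, ← Complex.exp_add]
    congr 1
    field_simp
    ring
  have hexp : cexp (-Real.pi * I * (z - l / (2 * m)) ^ 2 / (τ / (2 * m))) =
      (ee (m * z ^ 2 / τ))⁻¹ * ee (-l ^ 2 / (4 * m * τ) + l * z / τ) := by
    rw [← ee_neg, ← ee_add, ee]
    congr 1
    field_simp
    ring
  have hfactor : τ * thetaFactor m τ = (-I * (τ / (2 * m))) ^ (1 / 2 : ℂ) := by
    rw [thetaFactor, mul_div_cancel₀ _ hτ0]
  have hroot : (-I * (τ / (2 * m))) ^ (1 / 2 : ℂ) ≠ 0 :=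
    hfactor ▸ mul_ne_zero hτ0 (thetaFactor_ne_zero hτ)
  rw [htheta, jacobiTheta₂_functional_equation (z - l / (2 * m)), hexp, hfactor]
  field_simp [ee_ne_zero, hroot]

lemma hasSum_jTheta_neg_one_div (l : ZMod (2 * m)) (hτ : 0 < τ.im) (z : ℂ) :
    HasSum (fun n : ℤ => τ * thetaFactor m τ * ee (m * z ^ 2 / τ) *
        (ZMod.stdAddChar (-(l * (n : ZMod (2 * m)))) * ee (n ^ 2 / (4 * m) * τ + n * z)))
      (jTheta m l.cast (-1 / τ) (z / τ)) := by
  have hm : (m : ℂ) ≠ 0 := NeZero.ne _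
  set t : ℤ := l.cast with ht
  have hchar (n : ℤ) : (ZMod.stdAddChar (-(l * (n : ZMod (2 * m)))) : ℂ) *
      ee (n ^ 2 / (4 * m) * τ + n * z) = ee (n ^ 2 / (4 * m) * τ + n * (z - t / (2 * m))) := by
    have hl : -(l * (n : ZMod (2 * m))) = ((-(t * n) : ℤ) : ZMod (2 * m)) := by simp [ht]
    rw [hl, ← ee_intCast_div, ← ee_add]
    congr 1
    push_cast
    ring
  have hterm (n : ℤ) : ee (n ^ 2 / (4 * m) * τ + n * (z - t / (2 * m))) =
      jacobiTheta₂_term n (z - t / (2 * m)) (τ / (2 * m)) := by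
    rw [jacobiTheta₂_term, ee]
    congr 1
    field_simp
    ring
  rw [jTheta_neg_one_div t hτ]
  simp only [hchar]
  exact ((summable_theta hτ _).hasSum_iff.mpr (tsum_congr hterm)).mul_left _

lemma hasSum_mul_theta_neg_one_div (Φ : ZMod (2 * m) → ℂ) (hτ : 0 < τ.im) (z : ℂ) :
    HasSum (fun n : ℤ => τ * thetaFactor m τ * ee (m * z ^ 2 / τ) *
        (ZMod.dft Φ n * ee (n ^ 2 / (4 * m) * τ + n * z)))
      (∑ l, Φ l * jTheta m l.cast (-1 / τ) (z / τ)) := by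
  refine (hasSum_sum fun l _ => (hasSum_jTheta_neg_one_div l hτ z).mul_left (Φ l)).congr_fun
    fun n => ?_
  simp only [ZMod.dft_apply, smul_eq_mul, Finset.sum_mul, Finset.mul_sum]
  exact Finset.sum_congr rfl fun l _ => by ring

lemma dft_comp_mul_of_mul_self {N : ℕ} [NeZero N] (Φ : ZMod N → ℂ) {a : ZMod N}
    (ha : a * a = 1) : ZMod.dft (fun l => Φ (a * l)) = fun k => ZMod.dft Φ (a * k) := by
  funext k
  exact ZMod.dft_comp_unitMul Φ ⟨a, a, ha, ha⟩ k

lemma dft_add_natCast {N d e : ℕ} [NeZero N] (hde : N = d * e) {Φ : ZMod N → ℂ}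
    (hΦ : ∀ l : ℤ, ¬ (d : ℤ) ∣ l → Φ l = 0) (k : ZMod N) :
    ZMod.dft Φ (k + e) = ZMod.dft Φ k := by
  simp only [ZMod.dft_apply]
  refine Finset.sum_congr rfl fun j _ => ?_
  obtain ⟨r, rfl⟩ := ZMod.intCast_surjective j
  by_cases hr : (d : ℤ) ∣ r
  · obtain ⟨s, rfl⟩ := hr
    have hperiod : ((d * s : ℤ) : ZMod N) * (e : ZMod N) = 0 := by
      rw [Int.cast_mul, mul_right_comm, Int.cast_natCast, ← Nat.cast_mul, ← hde, ZMod.natCast_self,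
        zero_mul]
    rw [mul_add, hperiod, add_zero]
  · rw [hΦ r hr, smul_zero, smul_zero]

end theta

/-- The coefficients `C(Δ, ·)`, as a vector indexed by the residues modulo `2m`. -/
def coeffVector (m : ℕ) (C : ℤ → ℤ → ℂ) (Δ : ℤ) : ZMod (2 * m) → ℂ := fun l => C Δ l.cast

/-- The vector of theta coefficients `h_l(τ) = ∑ C(Δ,l) q^{Δ/4m}`. -/
def thetaVector (m : ℕ) (C : ℤ → ℤ → ℂ) (τ : ℂ) : ZMod (2 * m) → ℂ :=
  ∑' Δ : ℤ, ee (Δ / (4 * m) * τ) • coeffVector m C Δ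

/-- `C` is the coefficient function of a convergent combination `∑ h_l θ_{m,l}` of theta
functions; no modularity is required. -/
structure HasThetaExpansion (m : ℕ) (C : ℤ → ℤ → ℂ) : Prop where
  periodic : ∀ Δ l : ℤ, C Δ (l + 2 * m) = C Δ l
  support : ∀ Δ l : ℤ, ¬ 4 * (m : ℤ) ∣ Δ + l ^ 2 → C Δ l = 0
  summable : ∀ τ : ℂ, 0 < τ.im → Summable fun Δ : ℤ => ee (Δ / (4 * m) * τ) • coeffVector m C Δ

lemma coeffVector_intCast {m : ℕ} {C : ℤ → ℤ → ℂ} {Δ : ℤ} (hC : ∀ l, C Δ (l + 2 * m) = C Δ l)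
    (r : ℤ) : coeffVector m C Δ r = C Δ r := by
  refine eq_of_forall_apply_add_eq hC ?_
  rw [ZMod.coe_intCast, ← dvd_neg, neg_sub]
  exact_mod_cast Int.dvd_self_sub_emod

lemma eq_zero_of_notMem_range_discriminant {m : ℕ} {C : ℤ → ℤ → ℂ} {r Δ : ℤ}
    (hC : ∀ Δ l : ℤ, ¬ 4 * (m : ℤ) ∣ Δ + l ^ 2 → C Δ l = 0)
    (hΔ : Δ ∉ Set.range fun n : ℤ => 4 * (m : ℤ) * n - r ^ 2) : C Δ r = 0 :=
  hC _ _ fun ⟨n, hn⟩ => hΔ ⟨n, by simp only; linarith⟩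

section fiber

variable {m : ℕ} [NeZero m]

lemma injective_discriminant (r : ℤ) :
    Function.Injective fun n : ℤ => 4 * (m : ℤ) * n - r ^ 2 := fun a b hab => by
  simpa [NeZero.ne m] using hab

lemma ee_mul_ee_discriminant (n r : ℤ) (τ z : ℂ) :
    ee (((4 * m * n - r ^ 2 : ℤ) : ℂ) / (4 * m) * τ) * ee (r ^ 2 / (4 * m) * τ + r * z) =
      ee (n * τ + r * z) := by
  have hm : (m : ℂ) ≠ 0 := NeZero.ne _
  rw [← ee_add]
  congr 1
  push_cast
  field_simp
  ring

end fiber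

namespace HasThetaExpansion

variable {m : ℕ} [NeZero m] {C : ℤ → ℤ → ℂ} {τ : ℂ}

omit [NeZero m] in
lemma hasSum (h : HasThetaExpansion m C) (hτ : 0 < τ.im) (l : ℤ) :
    HasSum (fun Δ : ℤ => ee (Δ / (4 * m) * τ) * C Δ l) (thetaVector m C τ l) := by
  have := Pi.hasSum.mp (h.summable τ hτ).hasSum (l : ZMod (2 * m))
  simpa only [thetaVector, Pi.smul_apply, coeffVector_intCast (h.periodic _), smul_eq_mul]
    using this

lemma hasSum_fiber (h : HasThetaExpansion m C) (hτ : 0 < τ.im) (z : ℂ) (r : ℤ) :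
    HasSum (fun n : ℤ => toFourierCoeff m C (n, r) * ee (n * τ + r * z))
      (thetaVector m C τ r * ee (r ^ 2 / (4 * m) * τ + r * z)) := by
  refine (((injective_discriminant (m := m) r).hasSum_iff fun Δ hΔ => ?_).mpr
    (h.hasSum hτ r)).mul_right _ |>.congr_fun fun n => ?_
  · rw [eq_zero_of_notMem_range_discriminant h.support hΔ, mul_zero]
  · rw [← ee_mul_ee_discriminant (m := m), toFourierCoeff, Function.comp_apply]
    ring

lemma summable_toFourierCoeff (h : HasThetaExpansion m C) (hτ : 0 < τ.im) (z : ℂ) :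
    Summable fun x : ℤ × ℤ => toFourierCoeff m C x * ee (x.1 * τ + x.2 * z) := by
  have hinj : Function.Injective fun x : ℤ × ℤ => (4 * (m : ℤ) * x.1 - x.2 ^ 2, x.2) := by
    rintro ⟨n, r⟩ ⟨n', r'⟩ hx
    obtain ⟨hn, hr⟩ := Prod.mk.inj hx
    subst hr
    exact Prod.ext (injective_discriminant _ hn) rfl
  have hbound := ((h.summable τ hτ).norm.mul_of_nonneg (summable_theta (m := m) hτ z).norm
    (fun _ => norm_nonneg _) fun _ => norm_nonneg _).comp_injective hinj
  refine Summable.of_norm_bounded hbound fun ⟨n, r⟩ => ?_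
  rw [toFourierCoeff, ← ee_mul_ee_discriminant (m := m), ← mul_assoc, norm_mul]
  refine mul_le_mul_of_nonneg_right ?_ (norm_nonneg _)
  have := norm_le_pi_norm (ee (((4 * m * n - r ^ 2 : ℤ) : ℂ) / (4 * m) * τ) •
    coeffVector m C (4 * m * n - r ^ 2)) (r : ZMod (2 * m))
  rwa [Pi.smul_apply, coeffVector_intCast (h.periodic _), smul_eq_mul, mul_comm] at this

lemma hasSum_fourierSeries (h : HasThetaExpansion m C) (hτ : 0 < τ.im) (z : ℂ) :
    HasSum (fun r : ℤ => thetaVector m C τ r * ee (r ^ 2 / (4 * m) * τ + r * z))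
      (fourierSeries (toFourierCoeff m C) τ z) := by
  have hsum := (h.summable_toFourierCoeff hτ z).hasSum
  rw [← (Equiv.prodComm ℤ ℤ).hasSum_iff] at hsum
  exact hsum.prod_fiberwise fun r => h.hasSum_fiber hτ z r

lemma hasSum_fourierSeries_neg_one_div (h : HasThetaExpansion m C) (hτ : 0 < τ.im) (z : ℂ) :
    HasSum (fun n : ℤ => τ * thetaFactor m τ * ee (m * z ^ 2 / τ) *
        (ZMod.dft (thetaVector m C (-1 / τ)) n * ee (n ^ 2 / (4 * m) * τ + n * z)))
      (fourierSeries (toFourierCoeff m C) (-1 / τ) (z / τ)) := by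
  have hτ' := im_neg_one_div_pos hτ
  rw [(h.hasSum_fourierSeries hτ' (z / τ)).unique (hasSum_mul_theta _ hτ' _)]
  exact hasSum_mul_theta_neg_one_div _ hτ z

theorem isWeightOneSeries_iff (h : HasThetaExpansion m C) :
    IsWeightOneSeries m (toFourierCoeff m C) ↔ ∀ τ : ℂ, 0 < τ.im →
      thetaVector m C τ = thetaFactor m τ • ZMod.dft (thetaVector m C (-1 / τ)) := by
  refine ⟨fun hS τ hτ => ?_, fun hS => ⟨fun τ z hτ => h.summable_toFourierCoeff hτ z,
    fun τ z hτ => ?_⟩⟩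
  · have hτ0 := ne_zero_of_im_pos hτ
    have hdiff : (fun r : ℤ => (thetaVector m C τ r - thetaFactor m τ *
        ZMod.dft (thetaVector m C (-1 / τ)) r) * ee (r ^ 2 / (4 * m) * τ)) = 0 := by
      refine eq_zero_of_hasSum_ee_real fun x => ?_
      have hpos := (h.hasSum_fourierSeries hτ x).mul_left (τ * ee (m * x ^ 2 / τ))
      rw [← hS.map_S τ x hτ] at hpos
      have := (hpos.sub (h.hasSum_fourierSeries_neg_one_div hτ x)).mul_left
        (τ * ee (m * x ^ 2 / τ))⁻¹
      rw [sub_self, mul_zero] at this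
      refine this.congr_fun fun r => ?_
      rw [ee_add]
      field_simp [ee_ne_zero]
    funext l
    obtain ⟨r, rfl⟩ := ZMod.intCast_surjective l
    simpa [ee_ne_zero, sub_eq_zero] using congrFun hdiff r
  · refine (h.hasSum_fourierSeries_neg_one_div hτ z).unique
      (((h.hasSum_fourierSeries hτ z).mul_left _).congr_fun fun r => ?_)
    rw [hS τ hτ, Pi.smul_apply, smul_eq_mul]
    ring

end HasThetaExpansion

namespace IsOptimalGrowthForm

variable {m : ℕ} [NeZero m] {C : ℤ → ℤ → ℂ} {τ : ℂ}

lemma hasThetaExpansion (h : IsOptimalGrowthForm m C) : HasThetaExpansion m C where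
  periodic := h.periodic
  support := h.support
  summable τ hτ := by
    refine Pi.summable.mpr fun l => ?_
    obtain ⟨r, rfl⟩ := ZMod.intCast_surjective l
    simp only [Pi.smul_apply, coeffVector_intCast (h.periodic _), smul_eq_mul]
    rw [← (injective_discriminant (m := m) r).summable_iff fun Δ hΔ => by
      rw [eq_zero_of_notMem_range_discriminant h.support hΔ, mul_zero]]
    have hfiber := (h.series.summable τ 0 hτ).comp_injective
      (i := fun n : ℤ => (n, r)) fun a b hab => congrArg Prod.fst hab
    refine (hfiber.mul_left (ee (r ^ 2 / (4 * m) * τ + r * 0))⁻¹).congr fun n => ?_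
    simp only [Function.comp_apply, ← ee_mul_ee_discriminant (m := m), toFourierCoeff]
    field_simp [ee_ne_zero]

lemma thetaVector_eq (h : IsOptimalGrowthForm m C) (hτ : 0 < τ.im) :
    thetaVector m C τ = thetaFactor m τ • ZMod.dft (thetaVector m C (-1 / τ)) :=
  h.hasThetaExpansion.isWeightOneSeries_iff.mp h.series τ hτ

lemma apply_eq_of_thetaVector_eq (h : IsOptimalGrowthForm m C) {l l' : ℤ}
    (heq : ∀ τ : ℂ, 0 < τ.im → thetaVector m C τ l = thetaVector m C τ l') (Δ : ℤ) :
    C Δ l = C Δ l' := by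
  have hdiff : (fun Δ => C Δ l - C Δ l') = 0 := by
    refine eq_zero_of_hasSum_ee (N := 4 * m) (Nat.pos_of_neZero _) fun τ hτ => ?_
    have := (h.hasThetaExpansion.hasSum hτ l).sub (h.hasThetaExpansion.hasSum hτ l')
    rw [heq τ hτ, sub_self] at this
    refine this.congr_fun fun Δ => ?_
    push_cast
    ring
  exact sub_eq_zero.mp (congrFun hdiff Δ)

omit [NeZero m] in
lemma coeffVector_comp_mul (h : IsOptimalGrowthForm m C) (a Δ : ℤ) (l : ZMod (2 * m)) :
    coeffVector m (fun Δ l => C Δ (a * l)) Δ l = coeffVector m C Δ (a * l) := by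
  rw [coeffVector, ← coeffVector_intCast (h.periodic Δ)]
  simp

lemma hasThetaExpansion_comp_mul (h : IsOptimalGrowthForm m C) {a : ℤ}
    (ha : 4 * (m : ℤ) ∣ a ^ 2 - 1) : HasThetaExpansion m fun Δ l => C Δ (a * l) where
  periodic Δ l := h.eq_of_dvd_sub Δ ⟨a, by ring⟩
  support Δ l hd := h.support _ _ fun hd' => hd <| by
    have := dvd_sub hd' (ha.mul_right (l ^ 2))
    rwa [show Δ + (a * l) ^ 2 - (a ^ 2 - 1) * l ^ 2 = Δ + l ^ 2 by ring] at this
  summable τ hτ := by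
    refine Pi.summable.mpr fun l => ?_
    simp only [Pi.smul_apply, h.coeffVector_comp_mul]
    exact Pi.summable.mp (h.hasThetaExpansion.summable τ hτ) (a * l)

lemma thetaVector_comp_mul (h : IsOptimalGrowthForm m C) {a : ℤ} (hτ : 0 < τ.im)
    (ha : 4 * (m : ℤ) ∣ a ^ 2 - 1) :
    thetaVector m (fun Δ l => C Δ (a * l)) τ = fun l => thetaVector m C τ (a * l) := by
  funext l
  rw [thetaVector, tsum_apply ((h.hasThetaExpansion_comp_mul ha).summable τ hτ), thetaVector,
    tsum_apply (h.hasThetaExpansion.summable τ hτ)]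
  simp only [Pi.smul_apply, h.coeffVector_comp_mul]

theorem comp_mul (h : IsOptimalGrowthForm m C) {a : ℤ} (ha : 4 * (m : ℤ) ∣ a ^ 2 - 1) :
    IsOptimalGrowthForm m fun Δ l => C Δ (a * l) where
  periodic := (h.hasThetaExpansion_comp_mul ha).periodic
  support := (h.hasThetaExpansion_comp_mul ha).support
  optimalGrowth Δ l hΔ := h.optimalGrowth Δ _ hΔ
  series := by
    have ha' : (a : ZMod (2 * m)) * a = 1 := by
      rw [← sub_eq_zero]
      have := (ZMod.intCast_zmod_eq_zero_iff_dvd (a * a - 1) (2 * m)).mpr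
        ((Dvd.intro 2 (by push_cast; ring)).trans (sq a ▸ ha))
      exact_mod_cast this
    refine (h.hasThetaExpansion_comp_mul ha).isWeightOneSeries_iff.mpr fun τ hτ => ?_
    rw [h.thetaVector_comp_mul hτ ha, h.thetaVector_comp_mul (im_neg_one_div_pos hτ) ha,
      dft_comp_mul_of_mul_self _ ha']
    exact funext fun l => congrFun (h.thetaVector_eq hτ) (a * l)

lemma thetaVector_eq_zero_of_forall (h : IsOptimalGrowthForm m C) (hτ : 0 < τ.im) {l : ℤ}
    (hl : ∀ Δ, C Δ l = 0) : thetaVector m C τ l = 0 := by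
  simpa [hl] using (h.hasThetaExpansion.hasSum hτ l).unique (by simp [hl])

lemma apply_add_of_support (h : IsOptimalGrowthForm m C) {d e : ℕ} (hde : 2 * m = d * e)
    (hd : ∀ Δ l : ℤ, ¬ (d : ℤ) ∣ l → C Δ l = 0) (Δ l : ℤ) : C Δ (l + e) = C Δ l := by
  refine h.apply_eq_of_thetaVector_eq (fun τ hτ => ?_) Δ
  have hsupp (l : ℤ) (hl : ¬ (d : ℤ) ∣ l) : thetaVector m C (-1 / τ) l = 0 :=
    h.thetaVector_eq_zero_of_forall (im_neg_one_div_pos hτ) fun Δ => hd Δ l hl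
  rw [h.thetaVector_eq hτ, Pi.smul_apply, Pi.smul_apply, Int.cast_add, Int.cast_natCast,
    dft_add_natCast hde hsupp]

lemma eq_zero_of_support_of_not_dvd (h : IsOptimalGrowthForm m C) {d e : ℕ} (hde : 2 * m = d * e)
    (hndvd : ¬ d ∣ e) (hd : ∀ Δ l : ℤ, ¬ (d : ℤ) ∣ l → C Δ l = 0) : C = 0 := by
  funext Δ l
  by_cases hl : (d : ℤ) ∣ l
  · rw [← h.apply_add_of_support hde hd]
    exact hd _ _ fun hle => hndvd <| Int.natCast_dvd_natCast.mp ((dvd_add_right hl).mp hle)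
  · exact hd Δ l hl

lemma eq_zero_of_forall_ne_zero (h : IsOptimalGrowthForm m C)
    (h0 : ∀ Δ l, Δ ≠ 0 → C Δ l = 0) : C = 0 := by
  have hconst (l : ℤ) {τ : ℂ} (hτ : 0 < τ.im) : thetaVector m C τ l = C 0 l := by
    refine (h.hasThetaExpansion.hasSum hτ l).unique ?_
    convert hasSum_single (0 : ℤ) fun Δ hΔ => ?_ using 1
    · simp [ee_zero]
    · rw [h0 Δ l hΔ, mul_zero]
  have hsq (l : ℤ) {τ : ℂ} (hτ : 0 < τ.im) :
      τ * C 0 l ^ 2 = -I / (2 * m) * ZMod.dft (coeffVector m C 0) l ^ 2 := by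
    have hvec {τ : ℂ} (hτ : 0 < τ.im) : thetaVector m C τ = coeffVector m C 0 := by
      funext k
      obtain ⟨r, rfl⟩ := ZMod.intCast_surjective k
      rw [hconst r hτ, coeffVector_intCast (h.periodic 0)]
    have := congrFun (h.thetaVector_eq hτ) l
    rw [hconst l hτ, hvec (im_neg_one_div_pos hτ), Pi.smul_apply, smul_eq_mul] at this
    rw [this, mul_pow, thetaFactor_sq hτ]
    field_simp [ne_zero_of_im_pos hτ, NeZero.ne m]
  funext Δ l
  rcases eq_or_ne Δ 0 with rfl | hΔ
  · have hI : I * C 0 l ^ 2 = 0 := by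
      linear_combination hsq l (τ := 2 * I) (by simp) - hsq l (τ := I) (by simp)
    simpa using hI
  · exact h0 Δ l hΔ

lemma thetaVector_neg_one_div (h : IsOptimalGrowthForm m C) (hτ : 0 < τ.im) :
    thetaVector m C (-1 / τ) = thetaFactor m (-1 / τ) • ZMod.dft (thetaVector m C τ) := by
  have hinv : -1 / (-1 / τ) = τ := by field_simp [ne_zero_of_im_pos hτ]
  rw [h.thetaVector_eq (im_neg_one_div_pos hτ), hinv]

section rigid

variable {p : ℕ} [NeZero p]

lemma exists_thetaVector_add_inv (h : IsOptimalGrowthForm m C)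
    (hp : ∀ Δ₁ Δ₂ l : ℤ, C Δ₁ l ≠ 0 → C Δ₂ l ≠ 0 → (4 * m * p : ℤ) ∣ Δ₁ - Δ₂) :
    ∃ D : Module.End ℂ (ZMod (2 * m) → ℂ), ∀ τ : ℂ, 0 < τ.im →
      thetaVector m C (τ + 1 / p) = D (thetaVector m C τ) := by
  have hphase (l : ZMod (2 * m)) :
      ∃ w : ℂ, ∀ Δ : ℤ, ee (Δ / (4 * m) * (1 / p)) * C Δ l.cast = w * C Δ l.cast := by
    by_cases! hl : ∃ Δ₀, C Δ₀ l.cast ≠ 0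
    · obtain ⟨Δ₀, hΔ₀⟩ := hl
      refine ⟨ee (Δ₀ / (4 * m) * (1 / p)), fun Δ => ?_⟩
      rcases eq_or_ne (C Δ l.cast) 0 with hΔ | hΔ
      · rw [hΔ, mul_zero, mul_zero]
      obtain ⟨k, hk⟩ := hp Δ Δ₀ _ hΔ hΔ₀
      rw [ee_eq_of_eq_add_intCast k]
      rw [eq_add_of_sub_eq hk]
      push_cast
      field_simp [NeZero.ne m, NeZero.ne p]
      ring
    · exact ⟨0, by simp [hl]⟩
  choose w hw using hphase
  refine ⟨LinearMap.pi fun l => w l • LinearMap.proj l, fun τ hτ => funext fun l => ?_⟩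
  have hsum := h.hasThetaExpansion.hasSum (im_add_one_div_natCast_pos (p := p) hτ) l.cast
  have hsum' := (h.hasThetaExpansion.hasSum hτ l.cast).mul_left (w l)
  rw [ZMod.intCast_zmod_cast] at hsum hsum'
  refine hsum.unique (hsum'.congr_fun fun Δ => ?_)
  rw [mul_add, ee_add, mul_assoc, hw]
  ring

omit [NeZero m] [NeZero p] in
lemma thetaVector_add_div (D : Module.End ℂ (ZMod (2 * m) → ℂ))
    (hD : ∀ τ : ℂ, 0 < τ.im → thetaVector m C (τ + 1 / p) = D (thetaVector m C τ)) (n : ℕ)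
    (hτ : 0 < τ.im) : thetaVector m C (τ + n / p) = (D ^ n) (thetaVector m C τ) := by
  induction n with
  | zero => simp
  | succ n ih =>
    have him : 0 < (τ + n / p).im := by
      simpa [← Complex.ofReal_natCast, ← Complex.ofReal_div] using hτ
    rw [pow_succ', Module.End.mul_apply, ← ih, ← hD _ him]
    push_cast
    ring_nf

/-- The translation by `1 / p` and the inversion generate `τ ↦ τ / p²`. -/
lemma exists_thetaVector_div_sq (h : IsOptimalGrowthForm m C)
    (hp : ∀ Δ₁ Δ₂ l : ℤ, C Δ₁ l ≠ 0 → C Δ₂ l ≠ 0 → (4 * m * p : ℤ) ∣ Δ₁ - Δ₂) :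
    ∃ L : Module.End ℂ (ZMod (2 * m) → ℂ), ∀ τ : ℂ, 0 < τ.im →
      thetaVector m C (τ / p ^ 2) = L (thetaVector m C τ) := by
  obtain ⟨D, hD⟩ := h.exists_thetaVector_add_inv hp
  obtain ⟨c, hc⟩ := exists_thetaFactor_prod_eq m p
  let F : Module.End ℂ (ZMod (2 * m) → ℂ) := ZMod.dft.toLinearMap
  refine ⟨c • (D * F * D ^ (p ^ 2) * F * D * F), fun τ hτ => ?_⟩
  have h₁ := im_add_one_div_natCast_pos (p := p) (im_neg_one_div_pos hτ)
  have h₂ : 0 < (-1 / (-1 / τ + 1 / p) + p).im := by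
    simpa only [add_im, natCast_im, add_zero] using im_neg_one_div_pos h₁
  have hτ₁ : τ / p ^ 2 = -1 / (-1 / (-1 / τ + 1 / p) + p) + 1 / p := by
    have hp0 : (p : ℂ) ≠ 0 := NeZero.ne _
    have hinv : -1 / (-1 / (-1 / τ + 1 / p) + (p : ℂ)) = (-1 / τ + 1 / p) * τ / p :=
      (div_eq_div_iff (ne_zero_of_im_pos h₂) hp0).mpr <| by
        linear_combination -neg_one_div_add_mul_mul (p := p) hτ
    rw [hinv]
    field_simp [ne_zero_of_im_pos hτ]
    ring
  have hshift : thetaVector m C (-1 / (-1 / τ + 1 / p) + p) =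
      (D ^ p ^ 2) (thetaVector m C (-1 / (-1 / τ + 1 / p))) := by
    rw [← thetaVector_add_div D hD _ (im_neg_one_div_pos h₁)]
    congr 2
    push_cast
    field_simp [NeZero.ne p]
  rw [hτ₁, hD _ (im_neg_one_div_pos h₂), h.thetaVector_neg_one_div h₂, hshift,
    h.thetaVector_neg_one_div h₁, hD _ (im_neg_one_div_pos hτ), h.thetaVector_neg_one_div hτ,
    ← hc τ hτ]
  simp only [map_smul, Module.End.mul_apply, LinearMap.smul_apply, smul_smul]
  rfl

lemma exists_eq_extendByDiv (h : IsOptimalGrowthForm m C)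
    (hp : ∀ Δ₁ Δ₂ l : ℤ, C Δ₁ l ≠ 0 → C Δ₂ l ≠ 0 → (4 * m * p : ℤ) ∣ Δ₁ - Δ₂) :
    ∃ L : Module.End ℂ (ZMod (2 * m) → ℂ), ∀ l : ZMod (2 * m),
      (fun Δ => C Δ l.cast) = extendByDiv (p ^ 2) fun Δ => L (coeffVector m C Δ) l := by
  obtain ⟨L, hL⟩ := h.exists_thetaVector_div_sq hp
  refine ⟨L, fun l => sub_eq_zero.mp <| eq_zero_of_hasSum_ee (N := 4 * m * p ^ 2)
    (Nat.pos_of_neZero _) fun τ hτ => ?_⟩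
  have hleft := h.hasThetaExpansion.hasSum (τ := τ / p ^ 2) (by
    simpa [← Complex.ofReal_natCast, ← Complex.ofReal_pow] using
      div_pos hτ (pow_pos (Nat.cast_pos.mpr (NeZero.pos p)) 2)) l.cast
  have hL' : HasSum (fun Δ : ℤ => ee (Δ / (4 * m) * τ) * L (coeffVector m C Δ) l)
      (thetaVector m C (τ / p ^ 2) l) := by
    have := (h.hasThetaExpansion.summable τ hτ).hasSum.mapL (LinearMap.toContinuousLinearMap L)
    rw [hL τ hτ, thetaVector]
    simpa using Pi.hasSum.mp this l
  have hp0 : (p : ℤ) ^ 2 ≠ 0 := pow_ne_zero 2 (by exact_mod_cast NeZero.ne p)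
  have hright : HasSum (fun x : ℤ => ee (x / (4 * m * p ^ 2) * τ) *
      extendByDiv (p ^ 2) (fun Δ => L (coeffVector m C Δ) l) x)
      (thetaVector m C (τ / p ^ 2) l) := by
    refine ((mul_right_injective₀ hp0).hasSum_iff fun x hx => ?_).mp <| hL'.congr_fun fun Δ => ?_
    · rw [extendByDiv_of_not_dvd fun ⟨k, hk⟩ => hx ⟨k, hk.symm⟩, mul_zero]
    · rw [Function.comp_apply, extendByDiv_mul_self hp0]
      congr 2
      push_cast
      field_simp [NeZero.ne p]
  have hdiff := hleft.sub hright
  rw [ZMod.intCast_zmod_cast, sub_self] at hdiff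
  refine hdiff.congr_fun fun Δ => ?_
  simp only [Pi.sub_apply, sub_mul, mul_comm (ee _)]
  push_cast
  congr 3
  ring

theorem eq_zero_of_dvd_sub (h : IsOptimalGrowthForm m C) (hp1 : 1 < p)
    (hp : ∀ Δ₁ Δ₂ l : ℤ, C Δ₁ l ≠ 0 → C Δ₂ l ≠ 0 → (4 * m * p : ℤ) ∣ Δ₁ - Δ₂) : C = 0 := by
  obtain ⟨L, hL⟩ := h.exists_eq_extendByDiv hp
  have hzero (n : ℕ) : ∀ Δ : ℤ, Δ ≠ 0 → Δ.natAbs = n → coeffVector m C Δ = 0 := by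
    induction n using Nat.strong_induction_on with
    | _ n ih =>
      rintro Δ hΔ rfl
      funext l
      rw [coeffVector, congrFun (hL l) Δ]
      by_cases hdvd : (p : ℤ) ^ 2 ∣ Δ
      · obtain ⟨k, rfl⟩ := hdvd
        have hk := right_ne_zero_of_mul hΔ
        rw [extendByDiv_mul_self (left_ne_zero_of_mul hΔ), ih k.natAbs ?_ k hk rfl, map_zero,
          Pi.zero_apply]
        · rw [Int.natAbs_mul, Int.natAbs_pow, Int.natAbs_natCast]
          exact lt_mul_of_one_lt_left (Int.natAbs_pos.mpr hk) (Nat.one_lt_pow two_ne_zero hp1)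
      · exact extendByDiv_of_not_dvd hdvd _
  refine h.eq_zero_of_forall_ne_zero fun Δ l hΔ => ?_
  rw [← coeffVector_intCast (h.periodic Δ), hzero _ Δ hΔ rfl]
  rfl

end rigid

end IsOptimalGrowthForm

/-! ### Taylor coefficients -/

lemma eq_of_hasSum_pow {a b : ℕ → ℂ} {F : ℂ → ℂ}
    (ha : ∀ z, HasSum (fun n => a n * z ^ n) (F z))
    (hb : ∀ z, HasSum (fun n => b n * z ^ n) (F z)) : a = b := by
  have key {c : ℕ → ℂ} (hc : ∀ z, HasSum (fun n => c n * z ^ n) (F z)) :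
      HasFPowerSeriesAt F (FormalMultilinearSeries.ofScalars ℂ c) 0 :=
    hasFPowerSeriesAt_iff.mpr <| Eventually.of_forall fun z => by
      simpa [FormalMultilinearSeries.coeff_ofScalars, mul_comm] using hc z
  exact FormalMultilinearSeries.ofScalars_series_injective ℂ ℂ
    ((key ha).eq_formalMultilinearSeries (key hb))

lemma hasSum_antidiagonal_mul_pow {a b : ℕ → ℂ} {z F G : ℂ}
    (ha : HasSum (fun n => a n * z ^ n) F) (hb : HasSum (fun n => b n * z ^ n) G) :
    HasSum (fun n => (∑ x ∈ Finset.HasAntidiagonal.antidiagonal n, a x.1 * b x.2) * z ^ n)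
      (F * G) := by
  have hsum := summable_norm_sum_mul_antidiagonal_of_summable_norm ha.summable.norm
    hb.summable.norm
  rw [← ha.tsum_eq, ← hb.tsum_eq, tsum_mul_tsum_eq_tsum_sum_antidiagonal_of_summable_norm
    ha.summable.norm hb.summable.norm]
  refine hsum.of_norm.hasSum.congr_fun fun n => ?_
  rw [Finset.sum_mul]
  refine Finset.sum_congr rfl fun x hx => ?_
  rw [← Finset.HasAntidiagonal.mem_antidiagonal.mp hx, pow_add]
  ring

lemma hasSum_cexp (w : ℂ) : HasSum (fun ν : ℕ => w ^ ν / ν.factorial) (cexp w) := by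
  simpa [Complex.exp_eq_exp_ℂ] using NormedSpace.expSeries_div_hasSum_exp (𝔸 := ℂ) w

section exp_series

variable {ι : Type*} {a : ι → ℂ} {b : ι → ℤ}

lemma summable_mul_pow_div_factorial (h : ∀ t : ℝ, Summable fun i => a i * cexp (b i * t))
    (z : ℂ) : Summable fun x : ι × ℕ => a x.1 * (b x.1 ^ x.2 / x.2.factorial) * z ^ x.2 := by
  refine .of_norm ((summable_prod_of_nonneg fun x => norm_nonneg _).mpr ?_)
  have hsum (i : ι) : HasSum (fun ν : ℕ => ‖a i * (b i ^ ν / ν.factorial) * z ^ ν‖)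
      (‖a i‖ * Real.exp (|(b i : ℝ)| * ‖z‖)) := by
    have := NormedSpace.expSeries_div_hasSum_exp (𝔸 := ℝ) (|(b i : ℝ)| * ‖z‖)
    rw [← Real.exp_eq_exp_ℝ] at this
    refine (this.mul_left ‖a i‖).congr_fun fun ν => ?_
    simp only [norm_mul, norm_div, norm_pow, Complex.norm_natCast, Complex.norm_intCast, mul_pow]
    ring
  refine ⟨fun i => (hsum i).summable, ?_⟩
  simp only [fun i => (hsum i).tsum_eq]
  have hexp (t : ℝ) : Summable fun i => ‖a i‖ * Real.exp (b i * t) := by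
    refine (h t).norm.congr fun i => ?_
    rw [norm_mul, Complex.norm_exp]
    simp
  refine ((hexp ‖z‖).add (hexp (-‖z‖))).of_nonneg_of_le (fun i => by positivity) fun i => ?_
  rw [← mul_add]
  gcongr
  rcases abs_choice (b i : ℝ) with hb | hb <;> rw [hb]
  · exact le_add_of_nonneg_right (Real.exp_nonneg _)
  · rw [neg_mul_comm]
    exact le_add_of_nonneg_left (Real.exp_nonneg _)

lemma summable_mul_pow_div_factorial_apply (h : ∀ t : ℝ, Summable fun i => a i * cexp (b i * t))
    (ν : ℕ) : Summable fun i => a i * (b i ^ ν / ν.factorial) := by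
  have hsum := (summable_mul_pow_div_factorial h 1).comp_injective (Prod.mk_left_injective ν)
  simp only [Function.comp_def, one_pow, mul_one] at hsum
  exact hsum

lemma hasSum_tsum_mul_pow_div_factorial (h : ∀ t : ℝ, Summable fun i => a i * cexp (b i * t))
    (z : ℂ) : HasSum (fun ν : ℕ => (∑' i, a i * (b i ^ ν / ν.factorial)) * z ^ ν)
      (∑' i, a i * cexp (b i * z)) := by
  have hsum := (summable_mul_pow_div_factorial h z).hasSum
  have hrow (i : ι) : HasSum (fun ν : ℕ => a i * (b i ^ ν / ν.factorial) * z ^ ν)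
      (a i * cexp (b i * z)) :=
    ((hasSum_cexp (b i * z)).mul_left (a i)).congr_fun fun ν => by ring
  rw [← (hsum.prod_fiberwise hrow).tsum_eq] at hsum
  have hswap := (Equiv.prodComm ℕ ι).hasSum_iff.mpr hsum
  refine hswap.prod_fiberwise fun ν => ?_
  exact (summable_mul_pow_div_factorial_apply h ν).hasSum.mul_right (z ^ ν)

end exp_series

/-- The moment `∑ᵣ c(n,r) rᵛ`; optimal growth confines the support to the summation range. -/
def moment (m : ℕ) (C : ℤ → ℤ → ℂ) (ν n : ℕ) : ℂ :=
  ∑ r ∈ Finset.Icc (-(4 * m * n + 1) : ℤ) (4 * m * n + 1), C (4 * m * n - r ^ 2) r * r ^ ν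

/-- The `q`-expansion of the `ν`-th Taylor coefficient at `z = 0`, in the variable `2πiz`. -/
def taylorSeries (m ν : ℕ) : (ℤ → ℤ → ℂ) →ₗ[ℂ] PowerSeries ℂ where
  toFun C := PowerSeries.mk fun n => moment m C ν n / ν.factorial
  map_add' C D := by
    ext n
    simp [moment, add_mul, add_div, Finset.sum_add_distrib]
  map_smul' a C := by
    ext n
    simp only [moment, PowerSeries.coeff_mk, map_smul, Pi.smul_apply, smul_eq_mul, mul_assoc,
      ← Finset.mul_sum, mul_div_assoc, RingHom.id_apply]

lemma coeff_taylorSeries (m ν : ℕ) (C : ℤ → ℤ → ℂ) (n : ℕ) :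
    (taylorSeries m ν C).coeff n = moment m C ν n / ν.factorial :=
  PowerSeries.coeff_mk n (fun n => moment m C ν n / ν.factorial)

section ModularTaylor

open UpperHalfPlane hiding I I_im
open EisensteinSeries ModularForm
open scoped MatrixGroups

/-- The `ν`-th Taylor coefficient at `z = 0`, in the variable `2πiz`. -/
def taylorCoeff (m : ℕ) (C : ℤ → ℤ → ℂ) (ν : ℕ) (τ : ℍ) : ℂ :=
  ∑' x : ℤ × ℤ, toFourierCoeff m C x * ee (x.1 * τ) * (x.2 ^ ν / ν.factorial)

namespace IsOptimalGrowthForm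

variable {m : ℕ} {C : ℤ → ℤ → ℂ}

lemma apply_eq_zero_of_neg [NeZero m] (h : IsOptimalGrowthForm m C) {n : ℤ} (hn : n < 0) (r : ℤ) :
    C (4 * m * n - r ^ 2) r = 0 := by
  have hm : (0 : ℤ) < m := by exact_mod_cast NeZero.pos m
  exact h.optimalGrowth _ _ (by nlinarith [sq_nonneg r])

lemma apply_eq_zero_of_notMem_Icc (h : IsOptimalGrowthForm m C) {n : ℕ} {r : ℤ}
    (hr : r ∉ Finset.Icc (-(4 * m * n + 1) : ℤ) (4 * m * n + 1)) :
    C (4 * m * n - r ^ 2) r = 0 := by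
  have hmn : (0 : ℤ) ≤ 4 * m * n := by positivity
  have hr' : (4 * m * n + 1 : ℤ) < |r| := by rwa [Finset.mem_Icc, ← abs_le, not_le] at hr
  exact h.optimalGrowth _ _ (by nlinarith [sq_abs r])

lemma hasSum_toFourierCoeff_mul_cexp (h : IsOptimalGrowthForm m C) (τ : ℍ) (z : ℂ) :
    HasSum (fun x : ℤ × ℤ => toFourierCoeff m C x * ee (x.1 * τ) * cexp (x.2 * z))
      (fourierSeries (toFourierCoeff m C) τ (z / (2 * Real.pi * I))) :=
  (h.series.hasSum τ.im_pos _).congr_fun fun x => by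
    rw [ee_add, mul_assoc, ee.eq_1 (x.2 * _)]
    congr 3
    field_simp [two_pi_I_ne_zero]

lemma hasSum_taylorCoeff (h : IsOptimalGrowthForm m C) (τ : ℍ) (z : ℂ) :
    HasSum (fun ν => taylorCoeff m C ν τ * z ^ ν)
      (fourierSeries (toFourierCoeff m C) τ (z / (2 * Real.pi * I))) := by
  rw [← (h.hasSum_toFourierCoeff_mul_cexp τ z).tsum_eq]
  exact hasSum_tsum_mul_pow_div_factorial
    (fun t => (h.hasSum_toFourierCoeff_mul_cexp τ t).summable) z

lemma taylor_mem_qSeries [NeZero m] (h : IsOptimalGrowthForm m C) (ν : ℕ) :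
    (taylorCoeff m C ν, taylorSeries m ν C) ∈ qSeries := by
  intro τ
  have hsum := (summable_mul_pow_div_factorial_apply
    (fun t => (h.hasSum_toFourierCoeff_mul_cexp τ t).summable) ν).hasSum
  have hrow := hsum.prod_fiberwise fun n =>
    (hsum.summable.comp_injective (Prod.mk_right_injective n)).hasSum
  rw [← (Nat.cast_injective (R := ℤ)).hasSum_iff] at hrow
  · refine hrow.congr_fun fun n => ?_
    simp only [Function.comp_apply, toFourierCoeff]
    rw [tsum_eq_sum (s := Finset.Icc (-(4 * m * n + 1) : ℤ) (4 * m * n + 1)) fun r hr => by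
      simp [h.apply_eq_zero_of_notMem_Icc hr]]
    rw [coeff_taylorSeries, moment, Finset.sum_div, Finset.sum_mul]
    refine Finset.sum_congr rfl fun r _ => ?_
    push_cast
    ring
  · intro n hn
    have hn0 : n < 0 := not_le.mp fun h0 => hn ⟨n.toNat, Int.toNat_of_nonneg h0⟩
    simp [toFourierCoeff, h.apply_eq_zero_of_neg hn0]

end IsOptimalGrowthForm

/-- The Taylor coefficients in `z` of `exp (-m E₂ z² / 12)`, with their `q`-expansions. -/
def expE2 (m i : ℕ) : (ℍ → ℂ) × PowerSeries ℂ :=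
  if Even i then ((-m / 12 : ℂ) ^ (i / 2) / (i / 2).factorial) • (E2, seriesE2) ^ (i / 2) else 0

lemma expE2_mem_qSeries (m i : ℕ) : expE2 m i ∈ qSeries := by
  unfold expE2
  split_ifs
  · exact Subalgebra.smul_mem _ (pow_mem E2_mem_qSeries _) _
  · exact zero_mem _

lemma expE2_snd_mem_boundedSeries {N : AbsoluteValue ℂ ℝ} (hN : IsNonarchimedean N) (m i : ℕ) :
    (expE2 m i).2 ∈ boundedSeries hN := by
  unfold expE2
  split_ifs
  · exact Subalgebra.smul_mem _ (pow_mem (seriesE2_mem_boundedSeries hN) _) _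
  · exact zero_mem _

lemma expE2_zero (m : ℕ) : expE2 m 0 = 1 := by simp [expE2]

lemma expE2_one (m : ℕ) : expE2 m 1 = 0 := by simp [expE2]

lemma hasSum_expE2 (m : ℕ) (τ : ℍ) (z : ℂ) :
    HasSum (fun i => (expE2 m i).1 τ * z ^ i) (cexp (-m / 12 * E2 τ * z ^ 2)) := by
  rw [← (mul_right_injective₀ (two_ne_zero (α := ℕ))).hasSum_iff]
  · refine (hasSum_cexp _).congr_fun fun j => ?_
    simp only [Function.comp_apply, expE2, even_two_mul, if_true,
      mul_div_cancel_left₀ j two_ne_zero, Prod.smul_fst, Prod.pow_fst, Pi.smul_apply,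
      Pi.pow_apply, smul_eq_mul, pow_mul]
    ring
  · intro i hi
    have hodd : ¬ Even i := fun ⟨j, hj⟩ => hi ⟨j, by lia⟩
    simp [expE2, hodd]

/-- The `ν`-th Taylor coefficient of `exp (-m E₂ (2πiz)² / 12) φ(τ, z)` in the variable `2πiz`;
unlike that of `φ` itself it is modular. -/
def correctedTaylorCoeff (m : ℕ) (C : ℤ → ℤ → ℂ) (ν : ℕ) : ℍ → ℂ :=
  ∑ x ∈ Finset.HasAntidiagonal.antidiagonal ν, (expE2 m x.1).1 * taylorCoeff m C x.2

/-- The `q`-expansion of `correctedTaylorCoeff`. -/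
def correctedTaylorSeries (m ν : ℕ) : (ℤ → ℤ → ℂ) →ₗ[ℂ] PowerSeries ℂ :=
  ∑ x ∈ Finset.HasAntidiagonal.antidiagonal ν,
    LinearMap.mulLeft ℂ (expE2 m x.1).2 ∘ₗ taylorSeries m x.2

lemma correctedTaylorSeries_apply (m ν : ℕ) (C : ℤ → ℤ → ℂ) :
    correctedTaylorSeries m ν C = ∑ x ∈ Finset.HasAntidiagonal.antidiagonal ν,
      (expE2 m x.1).2 * taylorSeries m x.2 C := by
  simp [correctedTaylorSeries]

lemma taylorSeries_mem_of_correctedTaylorSeries_mem {m K : ℕ} {C : ℤ → ℤ → ℂ}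
    {S : Submodule ℂ (PowerSeries ℂ)} (hS : ∀ i, ∀ P ∈ S, (expE2 m i).2 * P ∈ S)
    (hC : ∀ ν ≤ K, correctedTaylorSeries m ν C ∈ S) :
    ∀ ν ≤ K, taylorSeries m ν C ∈ S := by
  intro ν
  induction ν using Nat.strong_induction_on with
  | _ ν ih =>
  intro hν
  have hsplit := correctedTaylorSeries_apply m ν C
  rw [← Finset.add_sum_erase _ _ (a := (0, ν)) (by simp), expE2_zero, Prod.snd_one, one_mul]
    at hsplit
  rw [← sub_eq_iff_eq_add.mpr hsplit]
  refine sub_mem (hC ν hν) (sum_mem fun x hx => hS _ _ (ih _ ?_ ?_))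
  all_goals
    rw [Finset.mem_erase, Finset.HasAntidiagonal.mem_antidiagonal] at hx
    have : x.1 ≠ 0 := fun h0 => hx.1 (Prod.ext h0 (by lia))
    lia

namespace IsOptimalGrowthForm

variable {m : ℕ} {C : ℤ → ℤ → ℂ}

lemma correctedTaylor_mem_qSeries [NeZero m] (h : IsOptimalGrowthForm m C) (ν : ℕ) :
    (correctedTaylorCoeff m C ν, correctedTaylorSeries m ν C) ∈ qSeries := by
  have hmem := sum_mem (t := Finset.HasAntidiagonal.antidiagonal ν) fun x _ =>
    mul_mem (expE2_mem_qSeries m x.1) (h.taylor_mem_qSeries x.2)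
  convert hmem using 1
  simp [correctedTaylorCoeff, correctedTaylorSeries_apply, Prod.ext_iff, Prod.fst_sum,
    Prod.snd_sum]

lemma hasSum_correctedTaylorCoeff (h : IsOptimalGrowthForm m C) (τ : ℍ) (z : ℂ) :
    HasSum (fun ν => correctedTaylorCoeff m C ν τ * z ^ ν)
      (cexp (-m / 12 * E2 τ * z ^ 2) *
        fourierSeries (toFourierCoeff m C) τ (z / (2 * Real.pi * I))) :=
  (hasSum_antidiagonal_mul_pow (hasSum_expE2 m τ z) (h.hasSum_taylorCoeff τ z)).congr_fun
    fun ν => by simp [correctedTaylorCoeff]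

lemma correctedTaylorCoeff_S_smul (h : IsOptimalGrowthForm m C) (ν : ℕ) (τ : ℍ) :
    correctedTaylorCoeff m C ν (ModularGroup.S • τ) =
      (τ : ℂ) ^ (1 + ν : ℤ) * correctedTaylorCoeff m C ν τ := by
  have hτ : (τ : ℂ) ≠ 0 := UpperHalfPlane.ne_zero τ
  have hpi : (Real.pi : ℂ) ≠ 0 := ofReal_ne_zero.mpr Real.pi_ne_zero
  have hfactor (z : ℂ) : cexp (-m / 12 * E2 (ModularGroup.S • τ) * (z / τ) ^ 2) *
      ee (m * (z / (2 * Real.pi * I)) ^ 2 / τ) = cexp (-m / 12 * E2 τ * z ^ 2) := by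
    rw [E2_S_smul, ee, ← Complex.exp_add]
    congr 1
    field_simp
    linear_combination 12 * m * z ^ 2 * I_sq
  have hcoeff := congrFun (eq_of_hasSum_pow
    (a := fun ν => correctedTaylorCoeff m C ν (ModularGroup.S • τ) / (τ : ℂ) ^ ν)
    (b := fun ν => τ * correctedTaylorCoeff m C ν τ)
    (F := fun z => τ * (cexp (-m / 12 * E2 τ * z ^ 2) *
      fourierSeries (toFourierCoeff m C) τ (z / (2 * Real.pi * I))))
    (fun z => ?_) fun z => ?_) ν
  · rw [zpow_add₀ hτ, zpow_one, zpow_natCast, mul_right_comm, ← hcoeff,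
      div_mul_cancel₀ _ (pow_ne_zero ν hτ)]
  · have hz := h.hasSum_correctedTaylorCoeff (ModularGroup.S • τ) (z / τ)
    have hS : ((ModularGroup.S • τ : ℍ) : ℂ) = -1 / τ := by
      rw [modular_S_smul, coe_mk, inv_neg, neg_div, one_div]
    rw [hS, div_right_comm, h.series.map_S _ _ τ.im_pos] at hz
    convert hz.congr_fun fun ν => ?_ using 1
    · rw [← hfactor]
      ring
    · rw [div_pow]
      ring
  · exact ((h.hasSum_correctedTaylorCoeff τ z).mul_left _).congr_fun fun ν => mul_assoc ..

lemma correctedTaylorSeries_one [NeZero m] (h : IsOptimalGrowthForm m C) :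
    correctedTaylorSeries m 1 C = 0 :=
  eq_zero_of_weight_two (h.correctedTaylor_mem_qSeries 1) fun τ => by
    simpa using h.correctedTaylorCoeff_S_smul 1 τ

lemma apply_neg_one_one [NeZero m] (h : IsOptimalGrowthForm m C) : C (-1) 1 = 0 := by
  have hseries : taylorSeries m 1 C = 0 := by
    simpa [correctedTaylorSeries_apply, expE2_zero, expE2_one,
      Finset.Nat.antidiagonal_succ] using h.correctedTaylorSeries_one
  have hmoment : moment m C 1 0 = 0 := by
    simpa [coeff_taylorSeries] using congrArg (PowerSeries.coeff 0) hseries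
  have hodd : C (-1) (-1) = -C (-1) 1 := h.apply_neg _ _
  have hIcc : Finset.Icc (-1 : ℤ) 1 = {-1, 0, 1} := rfl
  simpa [moment, hIcc, hodd] using hmoment

lemma isHolC [NeZero m] (h : IsOptimalGrowthForm m C) : IsHolC C := by
  intro Δ l hΔ
  rcases lt_or_eq_of_le (Int.le_sub_one_of_lt hΔ) with hlt | rfl
  · exact h.optimalGrowth _ _ hlt
  · by_cases hl : 4 * (m : ℤ) ∣ -1 + l ^ 2
    · simpa using (h.comp_mul (a := l) (by rwa [sub_eq_neg_add])).apply_neg_one_one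
    · exact h.support _ _ hl

end IsOptimalGrowthForm

end ModularTaylor

/-! ### Boundedness of the coefficients and finiteness of the space of forms -/

namespace IsOptimalGrowthForm

variable {m : ℕ} {C : ℤ → ℤ → ℂ}

lemma apply_eq_zero_of_dvd (h : IsOptimalGrowthForm m C) (Δ : ℤ) {l : ℤ} (hl : (m : ℤ) ∣ l) :
    C Δ l = 0 := by
  have hper : C Δ l = C Δ (-l) :=
    h.eq_of_dvd_sub Δ (by rw [sub_neg_eq_add, ← two_mul]; exact mul_dvd_mul_left 2 hl)
  rwa [h.apply_neg, self_eq_neg] at hper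

lemma exists_lt_apply_eq (h : IsOptimalGrowthForm m C) (n : ℤ) {r : ℤ} (hr : (m : ℤ) < |r|) :
    ∃ n' < n, ∃ r', C (4 * m * n - r ^ 2) r = C (4 * m * n' - r' ^ 2) r' := by
  rcases lt_abs.mp hr with hr | hr
  · refine ⟨n - r + m, by linarith, r - 2 * m, ?_⟩
    rw [h.eq_of_dvd_sub _ (l := r) (l' := r - 2 * m) ⟨1, by ring⟩]
    ring_nf
  · refine ⟨n + r + m, by linarith, r + 2 * m, ?_⟩
    rw [h.eq_of_dvd_sub _ (l := r) (l' := r + 2 * m) ⟨-1, by ring⟩]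
    ring_nf

end IsOptimalGrowthForm

lemma sum_mul_eval_eq_sum_coeff_mul_moment (m : ℕ) (C : ℤ → ℤ → ℂ) (n : ℕ) {P : Polynomial ℤ}
    {K : ℕ} (hP : P.natDegree < K) :
    ∑ r ∈ Finset.Icc (-(4 * m * n + 1) : ℤ) (4 * m * n + 1), C (4 * m * n - r ^ 2) r * P.eval r =
      ∑ j ∈ Finset.range K, P.coeff j * moment m C j n := by
  simp only [moment, Finset.mul_sum]
  rw [Finset.sum_comm]
  refine Finset.sum_congr rfl fun r _ => ?_
  rw [Polynomial.eval_eq_sum_range' hP]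
  push_cast
  rw [Finset.mul_sum]
  exact Finset.sum_congr rfl fun j _ => by ring

lemma exists_polynomial_eval_eq_zero_not_dvd {m p : ℕ} (hp : p.Prime) (hpm : 2 * m < p) {r : ℤ}
    (hr : |r| < m) : ∃ P : Polynomial ℤ, P.natDegree < 2 * m + 1 ∧ ¬ (p : ℤ) ∣ P.eval r ∧
      ∀ s : ℤ, |s| < m → s ≠ r → P.eval s = 0 := by
  refine ⟨∏ s ∈ (Finset.Ioo (-m : ℤ) m).erase r, (.X - .C s), ?_, ?_, fun s hs hsr => ?_⟩
  · rw [Polynomial.natDegree_prod_of_monic _ _ fun s _ => Polynomial.monic_X_sub_C s]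
    have hcard := Finset.card_erase_le (s := Finset.Ioo (-m : ℤ) m) (a := r)
    rw [Int.card_Ioo] at hcard
    simp only [Polynomial.natDegree_X_sub_C, Finset.sum_const, smul_eq_mul, mul_one]
    lia
  · rw [Polynomial.eval_prod, (Nat.prime_iff_prime_int.mp hp).dvd_finsetProd_iff]
    rintro ⟨s, hs, hdvd⟩
    rw [Finset.mem_erase, Finset.mem_Ioo, ← abs_lt] at hs
    simp only [Polynomial.eval_sub, Polynomial.eval_X, Polynomial.eval_C] at hdvd
    have hlt : |r - s| < p := (abs_sub r s).trans_lt (by lia)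
    exact hs.1 (sub_eq_zero.mp (Int.eq_zero_of_abs_lt_dvd hdvd hlt)).symm
  · rw [Polynomial.eval_prod]
    exact Finset.prod_eq_zero (Finset.mem_erase.mpr ⟨hsr, Finset.mem_Ioo.mpr (abs_lt.mp hs)⟩)
      (by simp)

section Nonarchimedean

variable {m p : ℕ} {C : ℤ → ℤ → ℂ} {N : AbsoluteValue ℂ ℝ} {B : ℝ}

/-- Lagrange interpolation: up to the `p`-adic unit `P(r)`, each coefficient `c(n,r)` with `|r| < m`
is an integral combination of moments and of coefficients with smaller `n`. -/
lemma apply_le_of_moment_le (hN : IsNonarchimedean N) (hp : p.Prime)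
    (hNp : N p < 1) (hpm : 2 * m < p) (h : IsOptimalGrowthForm m C) (hB : 0 ≤ B) {n : ℕ}
    (hmoment : ∀ ν ≤ 2 * m, N (moment m C ν n) ≤ B)
    (hlarge : ∀ s : ℤ, m ≤ |s| → N (C (4 * m * n - s ^ 2) s) ≤ B) (r : ℤ) :
    N (C (4 * m * n - r ^ 2) r) ≤ B := by
  rcases le_or_gt (m : ℤ) |r| with hr | hr
  · exact hlarge r hr
  by_cases hrmem : r ∈ Finset.Icc (-(4 * m * n + 1) : ℤ) (4 * m * n + 1)
  swap
  · rwa [h.apply_eq_zero_of_notMem_Icc hrmem, map_zero]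
  obtain ⟨P, hdeg, hPr, hPs⟩ := exists_polynomial_eval_eq_zero_not_dvd hp hpm hr
  have hsplit := sum_mul_eval_eq_sum_coeff_mul_moment m C n hdeg
  rw [← Finset.add_sum_erase _ _ hrmem, ← eq_sub_iff_add_eq] at hsplit
  calc N (C (4 * m * n - r ^ 2) r) = N (C (4 * m * n - r ^ 2) r * P.eval r) := by
        rw [map_mul, apply_intCast_eq_one_of_not_dvd hN hp hNp hPr, mul_one]
    _ ≤ B := ?_
  rw [hsplit, sub_eq_add_neg]
  refine (hN _ _).trans (max_le ?_ ?_)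
  · refine apply_sum_le_of_forall_le hN hB fun j hj => ?_
    rw [map_mul]
    exact (mul_le_of_le_one_left (N.nonneg _) hN.apply_intCast_le_one).trans
      (hmoment j (Finset.mem_range_succ_iff.mp hj))
  · rw [N.map_neg]
    refine apply_sum_le_of_forall_le hN hB fun s hs => ?_
    rw [map_mul]
    rcases le_or_gt (m : ℤ) |s| with hms | hms
    · exact (mul_le_of_le_one_right (N.nonneg _) hN.apply_intCast_le_one).trans (hlarge s hms)
    · simpa [hPs s hms (Finset.ne_of_mem_erase hs)]

namespace IsOptimalGrowthForm

lemma apply_le_of_forall_moment_le [NeZero m] (h : IsOptimalGrowthForm m C)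
    (hN : IsNonarchimedean N) (hp : p.Prime) (hNp : N p < 1) (hpm : 2 * m < p) (hB : 0 ≤ B)
    (hmoment : ∀ ν ≤ 2 * m, ∀ n, N (moment m C ν n) ≤ B) (Δ l : ℤ) : N (C Δ l) ≤ B := by
  have hneg {n : ℤ} (hn : n < 0) (r : ℤ) : N (C (4 * m * n - r ^ 2) r) ≤ B := by
    rwa [h.apply_eq_zero_of_neg hn, map_zero]
  have hnat (n : ℕ) : ∀ r, N (C (4 * m * n - r ^ 2) r) ≤ B := by
    induction n using Nat.strong_induction_on with
    | _ n ih =>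
    refine apply_le_of_moment_le hN hp hNp hpm h hB (fun ν hν => hmoment ν hν n) fun s hs => ?_
    rcases hs.eq_or_lt with hs | hs
    · rwa [h.apply_eq_zero_of_dvd _ ((dvd_abs _ _).mp hs.dvd), map_zero]
    · obtain ⟨n', hn', s', hs'⟩ := h.exists_lt_apply_eq n hs
      rw [hs']
      rcases lt_or_ge n' 0 with h0 | h0
      · exact hneg h0 s'
      · lift n' to ℕ using h0
        exact ih n' (by exact_mod_cast hn') s'
  by_cases hd : 4 * (m : ℤ) ∣ Δ + l ^ 2
  · obtain ⟨n, hn⟩ := hd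
    obtain rfl : Δ = 4 * m * n - l ^ 2 := by linarith
    rcases lt_or_ge n 0 with h0 | h0
    · exact hneg h0 l
    · lift n to ℕ using h0
      exact hnat n l
  · rwa [h.support _ _ hd, map_zero]

lemma exists_forall_apply_le [NeZero m] (h : IsOptimalGrowthForm m C)
    (hN : IsNonarchimedean N) (hp : p.Prime) (hNp : N p < 1) (hpm : 2 * m < p) :
    ∃ B : ℝ, ∀ Δ l, N (C Δ l) ≤ B := by
  have hseries := taylorSeries_mem_of_correctedTaylorSeries_mem (K := 2 * m) (C := C)
    (S := (boundedSeries hN).toSubmodule)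
    (fun i P hP => (boundedSeries hN).mul_mem (expE2_snd_mem_boundedSeries hN m i) hP) fun ν _ =>
      mem_boundedSeries_of_mem_qSeries hN (h.correctedTaylor_mem_qSeries ν)
        (h.correctedTaylorCoeff_S_smul ν)
  have hbdd (ν : Fin (2 * m + 1)) : ∃ B, ∀ n, N (moment m C ν n) ≤ B := by
    obtain ⟨B, hB⟩ := (boundedSeries hN).smul_mem (hseries ν (Nat.lt_succ_iff.mp ν.2))
      ((ν : ℕ).factorial : ℂ)
    refine ⟨B, fun n => ?_⟩
    simpa [coeff_taylorSeries, mul_div_cancel₀, Nat.factorial_ne_zero] using hB n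
  choose B hB using hbdd
  obtain ⟨D, hD⟩ := (Set.finite_range B).bddAbove
  exact ⟨max D 0, h.apply_le_of_forall_moment_le hN hp hNp hpm (le_max_right _ _) fun ν hν n =>
    (hB ⟨ν, Nat.lt_succ_iff.mpr hν⟩ n).trans (le_max_of_le_left (hD ⟨_, rfl⟩))⟩

lemma eq_zero_of_correctedTaylorSeries_eq_zero [NeZero m] (h : IsOptimalGrowthForm m C)
    (hC : ∀ ν ≤ 2 * m, correctedTaylorSeries m ν C = 0) : C = 0 := by
  have hseries := taylorSeries_mem_of_correctedTaylorSeries_mem (K := 2 * m) (C := C)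
    (S := ⊥) (by simp) (by simpa using hC)
  obtain ⟨p, hpm, hp⟩ := Nat.exists_infinite_primes (2 * m + 1)
  obtain ⟨N, hN, hNp⟩ := exists_isNonarchimedean_absoluteValue_lt_one hp
  funext Δ l
  refine N.eq_zero.mp (le_antisymm ?_ (N.nonneg _))
  refine h.apply_le_of_forall_moment_le hN hp hNp hpm le_rfl (fun ν hν n => ?_) Δ l
  have hcoeff := congrArg (PowerSeries.coeff n) ((Submodule.mem_bot ℂ).mp (hseries ν hν))
  have hzero : moment m C ν n = 0 := by
    simpa [coeff_taylorSeries, Nat.factorial_ne_zero] using hcoeff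
  rw [hzero, map_zero]

end IsOptimalGrowthForm

end Nonarchimedean

open UpperHalfPlane ModularForm in
open scoped MatrixGroups in
/-- The map from level-one modular forms to `q`-expansions. -/
def qExpansionLinearMap (k : ℤ) : ModularForm 𝒮ℒ k →ₗ[ℂ] PowerSeries ℂ where
  toFun f := qExpansion 1 f
  map_add' f g := ModularForm.qExpansion_add one_pos one_mem_strictPeriods_SL f g
  map_smul' a f := ModularForm.qExpansion_smul one_pos one_mem_strictPeriods_SL a f

instance finiteDimensional_holomorphicForms (m : ℕ) [NeZero m] :
    FiniteDimensional ℂ (holomorphicForms m) := by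
  have hrange (C : holomorphicForms m) (ν : ℕ) :
      correctedTaylorSeries m ν C ∈ LinearMap.range (qExpansionLinearMap (1 + ν)) := by
    have hmem := C.2.1.correctedTaylor_mem_qSeries ν
    obtain ⟨F, hF⟩ := exists_modularForm_coe_eq hmem (C.2.1.correctedTaylorCoeff_S_smul ν)
    exact ⟨F, qExpansion_eq_of_mem_qSeries (hF ▸ hmem)⟩
  let T : holomorphicForms m →ₗ[ℂ]
      ∀ ν : Fin (2 * m + 1), LinearMap.range (qExpansionLinearMap (1 + (ν : ℕ))) :=
    LinearMap.pi fun ν => ((correctedTaylorSeries m ν).domRestrict _).codRestrict _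
      fun C => hrange C ν
  refine FiniteDimensional.of_injective T ((injective_iff_map_eq_zero T).mpr fun C hC => ?_)
  refine Subtype.ext (C.2.1.eq_zero_of_correctedTaylorSeries_eq_zero fun ν hν => ?_)
  exact congrArg Subtype.val (congrFun hC ⟨ν, Nat.lt_succ_iff.mpr hν⟩)

/-! ### Detecting squares by quadratic residue symbols -/

lemma exists_prime_gt_jacobiSym_two_eq_neg_one (K : ℕ) :
    ∃ p : ℕ, p.Prime ∧ K < p ∧ jacobiSym 2 p = -1 := by
  obtain ⟨p, hK, hp, hmod⟩ := Nat.forall_exists_prime_gt_and_modEq (max K 2) (q := 8) (a := 5)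
    (by norm_num) (by norm_num)
  have hp8 : (p : ZMod 8) = (5 : ℕ) := (ZMod.natCast_eq_natCast_iff _ _ _).mpr hmod
  refine ⟨p, hp, (le_max_left _ _).trans_lt hK, ?_⟩
  rw [jacobiSym.at_two (hp.odd_of_ne_two ((le_max_right _ _).trans_lt hK).ne'), hp8]
  decide

/-- Take `p ≡ 1` modulo `4a` and `p` a nonresidue modulo `q`. -/
lemma exists_prime_gt_jacobiSym_mul_eq_neg_one {q a : ℕ} (hq : q.Prime) (hq2 : q ≠ 2)
    (ha : a ≠ 0) (hqa : q.Coprime a) (K : ℕ) :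
    ∃ p : ℕ, p.Prime ∧ K < p ∧ jacobiSym (q * a) p = -1 := by
  have : Fact q.Prime := ⟨hq⟩
  have hodd : Odd q := hq.odd_of_ne_two hq2
  have hc : (4 * a).Coprime q :=
    .mul_left (Nat.Coprime.pow_left 2 (Nat.coprime_two_left.mpr hodd)) hqa.symm
  obtain ⟨u, hu⟩ := FiniteField.exists_nonsquare (F := ZMod q) (by rwa [ZMod.ringChar_zmod_n])
  obtain ⟨x, hx1, hxu⟩ := Nat.chineseRemainder hc 1 u.val
  have hxc : x.Coprime (4 * a * q) := by
    refine .mul_right ?_ ((ZMod.isUnit_iff_coprime x q).mp ?_)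
    · simpa using hx1.gcd_eq
    · rw [(ZMod.natCast_eq_natCast_iff _ _ _).mpr hxu, ZMod.natCast_zmod_val]
      exact (ne_of_apply_ne IsSquare (by simp [hu]) : u ≠ 0).isUnit
  obtain ⟨p, hK, hp, hmod⟩ := Nat.forall_exists_prime_gt_and_modEq (max K 2) (q := 4 * a * q)
    (by have := hq.ne_zero; positivity) hxc
  have hpa : p ≡ 1 [MOD 4 * a] := (hmod.of_mul_right q).trans hx1
  have hpq : ((p : ℤ) : ZMod q) = u := by
    rw [Int.cast_natCast, (ZMod.natCast_eq_natCast_iff _ _ _).mpr ((hmod.of_mul_left _).trans hxu),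
      ZMod.natCast_zmod_val]
  have hp2 : Odd p := hp.odd_of_ne_two ((le_max_right _ _).trans_lt hK).ne'
  have hsymA : jacobiSym a p = 1 := by
    rw [jacobiSym.mod_right _ hp2, Int.natAbs_natCast, hpa, Nat.mod_eq_of_lt (by lia),
      jacobiSym.one_right]
  have hsymQ : jacobiSym q p = -1 := by
    rw [jacobiSym.quadratic_reciprocity_one_mod_four' hodd (hpa.of_mul_right a),
      ZMod.nonsquare_iff_jacobiSym_eq_neg_one, hpq]
    exact hu
  exact ⟨p, hp, (le_max_left _ _).trans_lt hK, by rw [jacobiSym.mul_left, hsymA, hsymQ, mul_one]⟩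

lemma exists_prime_gt_jacobiSym_eq_neg_one {a : ℕ} (ha : Squarefree a) (ha1 : a ≠ 1) (K : ℕ) :
    ∃ p : ℕ, p.Prime ∧ K < p ∧ jacobiSym a p = -1 := by
  obtain rfl | ha2 := eq_or_ne a 2
  · exact exists_prime_gt_jacobiSym_two_eq_neg_one K
  obtain ⟨q, hq, hqa, hq2⟩ : ∃ q : ℕ, q.Prime ∧ q ∣ a ∧ q ≠ 2 := by
    by_contra! htwo
    obtain ⟨n, rfl⟩ : ∃ n, a = 2 ^ n :=
      ⟨_, Nat.eq_prime_pow_of_unique_prime_dvd ha.ne_zero fun {q} hq hqa => htwo q hq hqa⟩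
    have hn : n = 1 := ((Nat.squarefree_pow_iff (by decide) fun hn => ha1 (by simp [hn])).mp ha).2
    exact ha2 (by rw [hn, pow_one])
  obtain ⟨b, rfl⟩ := hqa
  simpa using exists_prime_gt_jacobiSym_mul_eq_neg_one hq hq2 (right_ne_zero_of_mul ha.ne_zero)
    (Nat.coprime_of_squarefree_mul ha) K

theorem isSquare_of_forall_jacobiSym_eq_one {n : ℕ} (hn : n ≠ 0) (K : ℕ)
    (h : ∀ p : ℕ, p.Prime → K < p → jacobiSym n p = 1) : IsSquare n := by
  obtain ⟨a, b, rfl, ha⟩ := Nat.sq_mul_squarefree n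
  obtain rfl | ha1 := eq_or_ne a 1
  · exact ⟨b, by ring⟩
  obtain ⟨p, hp, hK, hneg⟩ := exists_prime_gt_jacobiSym_eq_neg_one ha ha1 (K + b)
  have hb0 : b ≠ 0 := by rintro rfl; simp at hn
  have hb : (b : ℤ).gcd p = 1 := by
    simpa using (Nat.coprime_of_lt_prime hb0 (by lia) hp).symm
  have hone := h p hp (by lia)
  push_cast at hone
  rw [jacobiSym.mul_left, jacobiSym.sq_one' hb, hneg] at hone
  norm_num at hone

lemma exists_prime_odd_padicValInt {n : ℤ} (hn : 0 < n) (hs : ¬ IsSquare n) :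
    ∃ p : ℕ, p.Prime ∧ Odd (padicValInt p n) := by
  lift n to ℕ using hn.le
  obtain ⟨a, b, rfl, ha⟩ := Nat.sq_mul_squarefree n
  have ha1 : a ≠ 1 := by
    rintro rfl
    exact hs ⟨b, by push_cast; ring⟩
  obtain ⟨p, hp, hpa⟩ := Nat.exists_prime_and_dvd ha1
  have : Fact p.Prime := ⟨hp⟩
  have hb0 : b ≠ 0 := by rintro rfl; simp at hn
  have hval : padicValNat p a = 1 := by
    rw [← Nat.factorization_def _ hp]
    exact le_antisymm (ha.natFactorization_le_one p) (hp.factorization_pos_of_dvd ha.ne_zero hpa)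
  refine ⟨p, hp, ?_⟩
  rw [padicValInt.of_nat, padicValNat.mul (pow_ne_zero 2 hb0) ha.ne_zero, padicValNat.pow, hval]
  exact odd_two_mul_add_one _

lemma odd_padicValInt_of_isSquare_mul {p : ℕ} [Fact p.Prime] {a b : ℤ} (ha : a ≠ 0)
    (hb : Odd (padicValInt p b)) (hab : IsSquare (a * b)) : Odd (padicValInt p a) := by
  have hb0 : b ≠ 0 := by rintro rfl; simp at hb
  obtain ⟨s, hs⟩ := hab
  have hs0 : s ≠ 0 := by rintro rfl; simp [ha, hb0] at hs
  have hval := congrArg (padicValInt p) hs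
  rw [padicValInt.mul ha hb0, padicValInt.mul hs0 hs0] at hval
  exact (Nat.even_add'.mp ⟨_, hval⟩).mpr hb

lemma isSquare_of_isSquare_mul {a b : ℤ} (hb0 : b ≠ 0) (hb : IsSquare b)
    (hab : IsSquare (a * b)) : IsSquare a := by
  have hdiv : (a : ℚ) = (a * b : ℤ) / b := by field_simp [hb0]; push_cast; ring
  rw [← Rat.isSquare_intCast_iff] at hb hab ⊢
  exact hdiv ▸ hab.div hb

/-! ### Hecke eigenvalues -/

section Recurrence

variable {K : Type*} [Field K] {N : AbsoluteValue K ℝ} {x : ℕ → K} {B : ℝ}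

lemma exists_add_eq_mul_eq_one_lt [IsAlgClosed K] [NeZero (2 : K)] (s : K) {t : K}
    (ht : 1 < N t) : ∃ β γ : K, β + γ = s ∧ β * γ = t ∧ 1 < N β := by
  obtain ⟨α, hα⟩ : ∃ α : K, 1 * (α * α) + -s * α + t = 0 :=
    exists_quadratic_eq_zero one_ne_zero (IsAlgClosed.exists_eq_mul_self _)
  have hprod : α * (s - α) = t := by linear_combination -hα
  rcases lt_or_ge 1 (N α) with h | h
  · exact ⟨α, s - α, by ring, hprod, h⟩
  · refine ⟨s - α, α, by ring, by rw [mul_comm, hprod], ?_⟩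
    rw [← hprod, map_mul] at ht
    exact ht.trans_le (mul_le_of_le_one_left (N.nonneg _) h)

/-- The component of `x` along the root `β` grows like `β ^ n`. -/
lemma apply_one_eq_mul_of_bounded {β γ : K} (hβ : 1 < N β) (hB : ∀ n, N (x n) ≤ B)
    (hrec : ∀ n, x (n + 2) + β * γ * x n = (β + γ) * x (n + 1)) : x 1 = γ * x 0 := by
  have hpow (n : ℕ) : x (n + 1) - γ * x n = β ^ n * (x 1 - γ * x 0) := by
    induction n with
    | zero => simp
    | succ n ih => linear_combination hrec n + β * ih
  rw [← sub_eq_zero]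
  by_contra hne
  obtain ⟨n, hn⟩ := pow_unbounded_of_one_lt ((B + N γ * B) / N (x 1 - γ * x 0)) hβ
  rw [div_lt_iff₀ (N.pos hne), ← map_pow, ← map_mul, ← hpow] at hn
  refine hn.not_ge ((N.sub_le_add _ _).trans ?_)
  rw [map_mul]
  gcongr <;> apply hB

theorem eq_mul_add_one_of_bounded [IsAlgClosed K] [NeZero (2 : K)] {p ν χ : K} (hp0 : p ≠ 0)
    (hp : N p < 1) (hB : ∀ n, N (x n) ≤ B) (h0 : x 0 ≠ 0) (hχ : χ ^ 2 = 1)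
    (hinit : p * x 1 + χ * x 0 = ν * x 0)
    (hrec : ∀ n, p * x (n + 2) + x n = ν * x (n + 1)) : ν = χ * (p + 1) := by
  obtain ⟨β, γ, hsum, hprod, hβ⟩ := exists_add_eq_mul_eq_one_lt (N := N) (ν / p) (t := p⁻¹)
    (by rw [map_inv₀]; exact (one_lt_inv₀ (N.pos hp0)).mpr hp)
  have hν : ν = p * (β + γ) := by rw [hsum]; field_simp
  have hβγ : p * (β * γ) = 1 := by rw [hprod, mul_inv_cancel₀ hp0]
  have hx : x 1 = γ * x 0 := apply_one_eq_mul_of_bounded hβ hB fun n =>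
    mul_left_cancel₀ hp0 (by linear_combination hrec n + x n * hβγ + x (n + 1) * hν)
  have hχβ : χ = p * β := mul_right_cancel₀ h0 (by linear_combination hinit - p * hx + x 0 * hν)
  have hχγ : χ = γ := by linear_combination -χ * hβγ + χ * γ * hχβ.symm + γ * hχ
  linear_combination hν - p * hχγ - hχβ

end Recurrence

lemma gcd_neg_natCast_eq_one {p : ℕ} (hp : p.Prime) {Δ : ℤ} (hd : ¬ (p : ℤ) ∣ Δ) :
    (-Δ).gcd p = 1 := by
  rw [Int.neg_gcd, Int.gcd_comm, ← Int.isCoprime_iff_gcd_eq_one]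
  exact (Prime.coprime_iff_not_dvd (Nat.prime_iff_prime_int.mp hp)).mpr hd

namespace IsOptimalGrowthForm

variable {m : ℕ} [NeZero m] {C : ℤ → ℤ → ℂ}

lemma heckeT_apply_pow_mul (h : IsOptimalGrowthForm m C) {p : ℕ} (hp : p.Prime)
    (hpm : p.Coprime (2 * m)) (Δ r : ℤ) (n : ℕ) :
    heckeT m p C (p ^ (2 * (n + 1)) * Δ) (p ^ (n + 1) * r) =
      p * C (p ^ (2 * (n + 2)) * Δ) (p ^ (n + 2) * r) + C (p ^ (2 * n) * Δ) (p ^ n * r) := by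
  have hp0 : (p : ℤ) ≠ 0 := mod_cast hp.ne_zero
  have hΔ (n : ℕ) : (p : ℤ) ^ (2 * (n + 1)) * Δ = p ^ 2 * (p ^ (2 * n) * Δ) := by ring
  have hr (n : ℕ) : (p : ℤ) ^ (n + 1) * r = p * (p ^ n * r) := by ring
  have hsym : jacobiSym (-(p ^ 2 * (p ^ (2 * n) * Δ))) p = 0 := by
    have hdvd : (p : ℤ) ∣ -(p ^ 2 * (p ^ (2 * n) * Δ)) := ⟨-(p * (p ^ (2 * n) * Δ)), by ring⟩
    refine jacobiSym.eq_zero_iff.mpr ⟨hp.ne_zero, ?_⟩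
    rw [Int.gcd_eq_natAbs_right hdvd, Int.natAbs_natCast]
    exact hp.ne_one
  have hinv : C (p ^ (2 * n) * Δ) (modInverse m p * (p * (p ^ n * r))) =
      C (p ^ (2 * n) * Δ) (p ^ n * r) := by
    refine h.eq_of_dvd_sub _ ?_
    obtain ⟨a, ha⟩ := dvd_mul_modInverse_sub_one (NeZero.pos m) hpm
    exact ⟨a * (p ^ n * r), by linear_combination p ^ n * r * ha⟩
  rw [hΔ, hr, heckeT_apply, hsym, extendByDiv_mul_self (pow_ne_zero 2 hp0), hinv,
    hΔ (n + 1), hΔ n, hr (n + 1), hr n]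
  simp

theorem heckeT_eigenvalue_eq (h : IsOptimalGrowthForm m C) {p : ℕ} (hp : p.Prime)
    (hpm : 2 * m < p) {ν : ℂ} (hν : heckeT m p C = ν • C) {Δ r : ℤ} (hd : ¬ (p : ℤ) ∣ Δ)
    (hC : C Δ r ≠ 0) : ν = jacobiSym (-Δ) p * (p + 1) := by
  obtain ⟨N, hN, hNp⟩ := exists_isNonarchimedean_absoluteValue_lt_one hp
  obtain ⟨B, hB⟩ := h.exists_forall_apply_le hN hp hNp hpm
  have happly (Δ r : ℤ) : heckeT m p C Δ r = ν * C Δ r := congrFun₂ hν Δ r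
  refine eq_mul_add_one_of_bounded (mod_cast hp.ne_zero) hNp
    (x := fun n => C (p ^ (2 * n) * Δ) (p ^ n * r)) (fun n => hB _ _) (by simpa using hC)
    (mod_cast jacobiSym.sq_one (gcd_neg_natCast_eq_one hp hd)) ?_ fun n => ?_
  · have hext := extendByDiv_of_not_dvd (mt (dvd_trans (dvd_pow_self _ two_ne_zero)) hd)
      fun Δ' => C Δ' (modInverse m p * r)
    simpa [heckeT_apply, hext] using happly Δ r
  · rw [← h.heckeT_apply_pow_mul hp (Nat.coprime_of_lt_prime (NeZero.ne _) hpm hp), happly]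

theorem isSquare_mul_of_eigenform (h : IsOptimalGrowthForm m C)
    (hT : ∀ p : ℕ, p.Prime → p.Coprime (2 * m) → ∃ ν : ℂ, heckeT m p C = ν • C) {Δ Δ' r r' : ℤ}
    (hΔ : 0 < Δ) (hΔ' : 0 < Δ') (hC : C Δ r ≠ 0) (hC' : C Δ' r' ≠ 0) : IsSquare (Δ * Δ') := by
  lift Δ to ℕ using hΔ.le
  lift Δ' to ℕ using hΔ'.le
  norm_cast at hΔ hΔ'
  suffices IsSquare (Δ * Δ') by exact_mod_cast this
  refine isSquare_of_forall_jacobiSym_eq_one (by positivity) (2 * m + Δ + Δ') fun p hp hlarge => ?_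
  have hpm : 2 * m < p := by lia
  have hd : ¬ (p : ℤ) ∣ Δ := mod_cast Nat.not_dvd_of_pos_of_lt hΔ (by lia)
  have hd' : ¬ (p : ℤ) ∣ Δ' := mod_cast Nat.not_dvd_of_pos_of_lt hΔ' (by lia)
  obtain ⟨ν, hν⟩ := hT p hp (Nat.coprime_of_lt_prime (NeZero.ne _) hpm hp)
  have hsym : jacobiSym (-Δ) p = jacobiSym (-Δ') p := by
    have := (h.heckeT_eigenvalue_eq hp hpm hν hd hC).symm.trans
      (h.heckeT_eigenvalue_eq hp hpm hν hd' hC')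
    exact_mod_cast mul_right_cancel₀ p.cast_add_one_ne_zero this
  rw [Nat.cast_mul, ← neg_mul_neg, jacobiSym.mul_left, ← hsym, ← sq]
  exact jacobiSym.sq_one (gcd_neg_natCast_eq_one hp hd)

end IsOptimalGrowthForm

/-! ### Arithmetic of the support -/

lemma pow_succ_dvd_of_pow_dvd_sq {p : ℕ} [Fact p.Prime] {a : ℕ} {l : ℤ}
    (h : (p : ℤ) ^ (2 * a + 1) ∣ l ^ 2) : (p : ℤ) ^ (a + 1) ∣ l := by
  obtain rfl | hl := eq_or_ne l 0
  · exact dvd_zero _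
  rw [padicValInt_dvd_iff, sq, padicValInt.mul hl hl] at h
  rw [padicValInt_dvd_iff]
  have := h.resolve_left (mul_ne_zero hl hl)
  lia

/-- The valuations of `Δ` and of `l²` have different parity, so nothing cancels in `Δ + l²`. -/
lemma pow_dvd_of_odd_padicValInt {p : ℕ} [Fact p.Prime] {k : ℕ} {Δ l : ℤ}
    (hodd : Δ ≠ 0 → Odd (padicValInt p Δ)) (h : (p : ℤ) ^ k ∣ Δ + l ^ 2) : (p : ℤ) ^ k ∣ Δ := by
  obtain rfl | hΔ := eq_or_ne Δ 0
  · exact dvd_zero _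
  obtain ⟨a, ha⟩ := hodd hΔ
  by_contra hk
  rw [padicValInt_dvd_iff, not_or, not_le] at hk
  have hdvd : (p : ℤ) ^ (2 * a + 2) ∣ Δ + l ^ 2 := (pow_dvd_pow _ (by lia)).trans h
  have hΔa : (p : ℤ) ^ (2 * a + 1) ∣ Δ := ha ▸ padicValInt_dvd Δ
  have hla := pow_succ_dvd_of_pow_dvd_sq <|
    (Int.dvd_add_right hΔa).mp ((pow_dvd_pow _ (by lia)).trans hdvd)
  have hl2 : (p : ℤ) ^ (2 * a + 2) ∣ l ^ 2 := by
    simpa [← pow_mul, add_mul, mul_comm a] using pow_dvd_pow_of_dvd hla 2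
  have := (padicValInt_dvd_iff _ _).mp ((Int.dvd_add_left hl2).mp hdvd)
  lia

lemma two_pow_dvd_of_dvd_sq_add_sq {i : ℕ} {n l : ℤ} (h : (2 : ℤ) ^ (2 * i) ∣ n ^ 2 + l ^ 2) :
    (2 : ℤ) ^ i ∣ n ∧ (2 : ℤ) ^ i ∣ l := by
  induction i generalizing n l with
  | zero => simp
  | succ i ih =>
    have h4 : (4 : ℤ) ∣ n ^ 2 + l ^ 2 := dvd_trans ⟨2 ^ (2 * i), by ring⟩ h
    obtain ⟨⟨a, rfl⟩, b, rfl⟩ : (2 : ℤ) ∣ n ∧ (2 : ℤ) ∣ l := by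
      obtain ⟨a, rfl | rfl⟩ := Int.even_or_odd' n <;>
        obtain ⟨b, rfl | rfl⟩ := Int.even_or_odd' l <;> ring_nf at h4 <;> lia
    have hab : (4 : ℤ) * 2 ^ (2 * i) ∣ 4 * (a ^ 2 + b ^ 2) := by convert h using 1 <;> ring
    obtain ⟨ha, hb⟩ := ih (Int.dvd_of_mul_dvd_mul_left (by norm_num) hab)
    rw [pow_succ']
    exact ⟨mul_dvd_mul_left 2 ha, mul_dvd_mul_left 2 hb⟩

namespace IsOptimalGrowthForm

variable {m : ℕ} {C : ℤ → ℤ → ℂ}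

lemma dvd_add_sq (h : IsOptimalGrowthForm m C) {Δ l : ℤ} (hC : C Δ l ≠ 0) :
    4 * (m : ℤ) ∣ Δ + l ^ 2 := by
  by_contra hd
  exact hC (h.support Δ l hd)

lemma pow_dvd_fst {p : ℕ} [Fact p.Prime] (h : IsOptimalGrowthForm m C)
    (hodd : ∀ Δ l : ℤ, C Δ l ≠ 0 → Δ ≠ 0 → Odd (padicValInt p Δ)) {k : ℕ}
    (hk : (p : ℤ) ^ k ∣ 4 * m) {Δ l : ℤ} (hC : C Δ l ≠ 0) : (p : ℤ) ^ k ∣ Δ :=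
  pow_dvd_of_odd_padicValInt (hodd Δ l hC) (hk.trans (h.dvd_add_sq hC))

lemma pow_succ_dvd_snd {p a : ℕ} [Fact p.Prime] (h : IsOptimalGrowthForm m C)
    (hodd : ∀ Δ l : ℤ, C Δ l ≠ 0 → Δ ≠ 0 → Odd (padicValInt p Δ))
    (ha : (p : ℤ) ^ (2 * a + 1) ∣ 4 * m) {Δ l : ℤ} (hC : C Δ l ≠ 0) : (p : ℤ) ^ (a + 1) ∣ l :=
  pow_succ_dvd_of_pow_dvd_sq <|
    (Int.dvd_add_right (h.pow_dvd_fst hodd ha hC)).mp (ha.trans (h.dvd_add_sq hC))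

lemma exists_eq_sq_two_pow_dvd (h : IsOptimalGrowthForm m C)
    (hsq : ∀ Δ l : ℤ, C Δ l ≠ 0 → IsSquare Δ) {i : ℕ} (hi : (2 : ℤ) ^ (2 * i) ∣ 4 * m) {Δ l : ℤ}
    (hC : C Δ l ≠ 0) : ∃ n : ℤ, Δ = n ^ 2 ∧ (2 : ℤ) ^ i ∣ n ∧ (2 : ℤ) ^ i ∣ l := by
  obtain ⟨n, rfl⟩ := hsq Δ l hC
  rw [← sq] at hC ⊢
  exact ⟨n, rfl, two_pow_dvd_of_dvd_sq_add_sq (hi.trans (h.dvd_add_sq hC))⟩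

variable [NeZero m]

lemma eq_zero_of_forall_pow_dvd (h : IsOptimalGrowthForm m C) {p i j m' : ℕ} (hp : p.Prime)
    (hm : 2 * m = p ^ (j + i) * m') (hm' : ¬ p ∣ m') (hij : i < j)
    (hdvd : ∀ Δ l : ℤ, C Δ l ≠ 0 → (p : ℤ) ^ j ∣ l) : C = 0 := by
  refine h.eq_zero_of_support_of_not_dvd (d := p ^ j) (e := p ^ i * m')
    (by rw [hm, pow_add, mul_assoc]) (fun hd => hm' ?_) fun Δ l hl => ?_
  · have hpi : p ^ i * p ∣ p ^ i * m' := by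
      rw [← pow_succ]
      exact (pow_dvd_pow p hij).trans hd
    exact Nat.dvd_of_mul_dvd_mul_left (pow_pos hp.pos i) hpi
  · by_contra hC
    exact hl (by exact_mod_cast hdvd Δ l hC)

section Odd

variable {p a m' : ℕ} [Fact p.Prime]

/-- Here all `Δ` in the support with the same `l` agree modulo `4mp`: modulo `p ^ (2a + 1)` by
parity of the valuation, and modulo the prime-to-`p` part of `4m` by the support condition. -/
lemma eq_zero_of_odd_padicValInt_of_eq_pow_two_mul (h : IsOptimalGrowthForm m C)
    (hodd : ∀ Δ l : ℤ, C Δ l ≠ 0 → Δ ≠ 0 → Odd (padicValInt p Δ)) (hp2 : p ≠ 2)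
    (hm : 2 * m = p ^ (2 * a) * m') (hm' : ¬ p ∣ m') : C = 0 := by
  have hp : p.Prime := Fact.out
  have h4m : (4 * m : ℤ) = p ^ (2 * a) * (2 * m') := by
    have : (2 * m : ℤ) = p ^ (2 * a) * m' := mod_cast hm
    linear_combination 2 * this
  have hΔ {Δ l : ℤ} (hC : C Δ l ≠ 0) : (p : ℤ) ^ (2 * a + 1) ∣ Δ := by
    have hval := (padicValInt_dvd_iff _ _).mp (h.pow_dvd_fst hodd (Dvd.intro _ h4m.symm) hC)
    rw [padicValInt_dvd_iff]
    refine or_iff_not_imp_left.mpr fun h0 => ?_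
    obtain ⟨b, hb⟩ := hodd Δ l hC h0
    lia
  have hcop : IsCoprime ((p : ℤ) ^ (2 * a + 1)) (2 * m') := by
    have : p.Coprime (2 * m') := .mul_right ((Nat.coprime_primes hp Nat.prime_two).mpr hp2)
      (hp.coprime_iff_not_dvd.mpr hm')
    exact .pow_left (by exact_mod_cast Nat.isCoprime_iff_coprime.mpr this)
  refine h.eq_zero_of_dvd_sub hp.one_lt fun Δ₁ Δ₂ l h₁ h₂ => ?_
  have h4mp : (4 * m * p : ℤ) = p ^ (2 * a + 1) * (2 * m') := by rw [h4m]; ring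
  rw [h4mp]
  refine hcop.mul_dvd (dvd_sub (hΔ h₁) (hΔ h₂)) ((Dvd.intro_left _ h4m.symm).trans ?_)
  simpa using dvd_sub (h.dvd_add_sq h₁) (h.dvd_add_sq h₂)

theorem eq_zero_of_forall_odd_padicValInt (h : IsOptimalGrowthForm m C)
    (hodd : ∀ Δ l : ℤ, C Δ l ≠ 0 → Δ ≠ 0 → Odd (padicValInt p Δ)) : C = 0 := by
  have hp : p.Prime := Fact.out
  obtain ⟨k, m', hm', hk⟩ := Nat.exists_eq_pow_mul_and_not_dvd (NeZero.ne (2 * m)) p hp.ne_one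
  have h4m : (4 * m : ℤ) = 2 * (p ^ k * m') := by
    have : (2 * m : ℤ) = p ^ k * m' := mod_cast hk
    linear_combination 2 * this
  obtain ⟨a, rfl | rfl⟩ := Nat.even_or_odd' k
  · obtain rfl | hp2 := eq_or_ne p 2
    · cases a with
      | zero => exact absurd ⟨m, by simpa using hk.symm⟩ hm'
      | succ b =>
        have hdvd : ((2 : ℕ) : ℤ) ^ (2 * (b + 1) + 1) ∣ 4 * m := ⟨m', by rw [h4m]; push_cast; ring⟩
        exact h.eq_zero_of_forall_pow_dvd (i := b) (j := b + 2) hp (by rw [hk]; ring) hm' (by lia)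
          fun Δ l hC => h.pow_succ_dvd_snd hodd hdvd hC
    · exact h.eq_zero_of_odd_padicValInt_of_eq_pow_two_mul hodd hp2 hk hm'
  · have hdvd : (p : ℤ) ^ (2 * a + 1) ∣ 4 * m := ⟨2 * m', by rw [h4m]; ring⟩
    exact h.eq_zero_of_forall_pow_dvd (i := a) (j := a + 1) hp (by rw [hk]; ring) hm' (by lia)
      fun Δ l hC => h.pow_succ_dvd_snd hodd hdvd hC

end Odd

/-- The support lies over `2 ^ a ∣ l`, hence is invariant under `l ↦ l + 2 ^ a m'`; but the shift
changes the parity of `l / 2 ^ a`, which `Δ` determines. -/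
lemma eq_zero_of_isSquare_of_eq_two_pow_two_mul (h : IsOptimalGrowthForm m C)
    (hsq : ∀ Δ l : ℤ, C Δ l ≠ 0 → IsSquare Δ) {a m' : ℕ} (hm : 2 * m = 2 ^ (2 * a) * m')
    (hm' : ¬ 2 ∣ m') : C = 0 := by
  have h4m : (4 * m : ℤ) = 2 ^ (2 * a) * (2 * m') := by
    have : (2 * m : ℤ) = 2 ^ (2 * a) * m' := mod_cast hm
    linear_combination 2 * this
  have hdvd {Δ l : ℤ} (hC : C Δ l ≠ 0) :=
    h.exists_eq_sq_two_pow_dvd hsq (Dvd.intro _ h4m.symm) hC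
  have hshift := h.apply_add_of_support (d := 2 ^ a) (e := 2 ^ a * m') (by rw [hm]; ring)
    fun Δ l hl => by
      by_contra hC
      obtain ⟨n, -, -, hl'⟩ := hdvd hC
      exact hl (by exact_mod_cast hl')
  have heven {x y : ℤ} (hC : C ((2 ^ a * x) ^ 2) (2 ^ a * y) ≠ 0) : (2 : ℤ) ∣ x ^ 2 + y ^ 2 := by
    have hdvd := h.dvd_add_sq hC
    rw [h4m, mul_pow, mul_pow, ← mul_add, ← pow_mul, mul_comm a] at hdvd
    exact dvd_of_mul_right_dvd (Int.dvd_of_mul_dvd_mul_left (by positivity) hdvd)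
  funext Δ l
  by_contra hC
  obtain ⟨n, rfl, ⟨x, rfl⟩, y, rfl⟩ := hdvd hC
  have hy := heven hC
  have hy' : (2 : ℤ) ∣ x ^ 2 + (y + m') ^ 2 := heven <| by
    rw [mul_add, ← Nat.cast_ofNat, ← Nat.cast_pow, ← Nat.cast_mul, hshift]
    exact hC
  have hsum : ((m' : ℤ)) ^ 2 = x ^ 2 + (y + m') ^ 2 - (x ^ 2 + y ^ 2) - 2 * (y * m') := by ring
  refine hm' (Int.natCast_dvd_natCast.mp (Int.prime_two.dvd_of_dvd_pow (n := 2) ?_))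
  rw [hsum]
  exact dvd_sub (dvd_sub hy' hy) (dvd_mul_right _ _)

theorem eq_zero_of_forall_isSquare (h : IsOptimalGrowthForm m C)
    (hsq : ∀ Δ l : ℤ, C Δ l ≠ 0 → IsSquare Δ) : C = 0 := by
  obtain ⟨k, m', hm', hk⟩ := Nat.exists_eq_pow_mul_and_not_dvd (NeZero.ne (2 * m)) 2 (by decide)
  obtain ⟨a, rfl | rfl⟩ := Nat.even_or_odd' k
  · exact h.eq_zero_of_isSquare_of_eq_two_pow_two_mul hsq hk hm'
  · have hdvd : (2 : ℤ) ^ (2 * (a + 1)) ∣ 4 * m := by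
      have : (2 * m : ℤ) = 2 ^ (2 * a + 1) * m' := mod_cast hk
      exact ⟨m', by linear_combination 2 * this⟩
    refine h.eq_zero_of_forall_pow_dvd (i := a) (j := a + 1) Nat.prime_two (by rw [hk]; ring) hm'
      (by lia) fun Δ l hC => ?_
    obtain ⟨n, -, -, hl⟩ := h.exists_eq_sq_two_pow_dvd hsq hdvd hC
    exact_mod_cast hl

theorem eq_zero_of_forall_isSquare_mul (h : IsOptimalGrowthForm m C) (hhol : IsHolC C)
    (hsq : ∀ Δ Δ' l l' : ℤ, 0 < Δ → 0 < Δ' → C Δ l ≠ 0 → C Δ' l' ≠ 0 → IsSquare (Δ * Δ')) :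
    C = 0 := by
  have hpos {Δ l : ℤ} (hC : C Δ l ≠ 0) (hΔ : Δ ≠ 0) : 0 < Δ :=
    (not_lt.mp fun hlt => hC (hhol Δ l hlt)).lt_of_ne' hΔ
  by_cases! hconst : ∀ Δ l, Δ ≠ 0 → C Δ l = 0
  · exact h.eq_zero_of_forall_ne_zero hconst
  obtain ⟨Δ₀, l₀, hΔ₀, hC₀⟩ := hconst
  have hsq₀ {Δ l : ℤ} (hC : C Δ l ≠ 0) (hΔ : Δ ≠ 0) : IsSquare (Δ * Δ₀) :=
    hsq Δ Δ₀ l l₀ (hpos hC hΔ) (hpos hC₀ hΔ₀) hC hC₀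
  by_cases hS : IsSquare Δ₀
  · refine h.eq_zero_of_forall_isSquare fun Δ l hC => ?_
    obtain rfl | hΔ := eq_or_ne Δ 0
    · exact IsSquare.zero
    · exact isSquare_of_isSquare_mul hΔ₀ hS (hsq₀ hC hΔ)
  · obtain ⟨p, hp, hodd⟩ := exists_prime_odd_padicValInt (hpos hC₀ hΔ₀) hS
    have : Fact p.Prime := ⟨hp⟩
    exact h.eq_zero_of_forall_odd_padicValInt fun Δ l hC hΔ =>
      odd_padicValInt_of_isSquare_mul hΔ hodd (hsq₀ hC hΔ)

end IsOptimalGrowthForm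

theorem holomorphicForms_eq_bot (m : ℕ) [NeZero m] : holomorphicForms m = ⊥ := by
  by_contra hne
  obtain ⟨C, ⟨h, hhol⟩, hC0, hT⟩ := exists_common_heckeT_eigenform (NeZero.pos m) hne
  exact hC0 <| h.eq_zero_of_forall_isSquare_mul hhol fun _ _ _ _ => h.isSquare_mul_of_eigenform hT

lemma fourierSeries_toFourierCoeff_coeff {m : ℕ} (φ : EllFormData m) {τ : ℂ} (hτ : 0 < τ.im)
    (z : ℂ) : fourierSeries (toFourierCoeff m φ.coeff) τ z = φ.toFun τ z :=
  (φ.expansion τ z hτ).tsum_eq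

lemma isOptimalGrowthForm_coeff {m : ℕ} {φ : EllFormData m} (hmod : ModularLaw 1 m φ.toFun)
    (hOG : IsOGC φ.coeff) : IsOptimalGrowthForm m φ.coeff where
  periodic := φ.periodic
  support := φ.support
  optimalGrowth := hOG
  series := by
    refine ⟨fun τ z hτ => (φ.expansion τ z hτ).summable, fun τ z hτ => ?_⟩
    rw [fourierSeries_toFourierCoeff_coeff φ hτ,
      fourierSeries_toFourierCoeff_coeff φ (im_neg_one_div_pos hτ)]
    simpa using hmod τ hτ z 0 (-1) 1 0 (by norm_num)

/-- Theorem: there are no nonzero weak Jacobi forms of weight 1 and index `m` with optimal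
growth: any such form vanishes identically on `ℍ × ℂ`. -/
theorem no_weight_one_optimal_growth (m : ℕ) (hm : 0 < m) (φ : EllFormData m)
    (hmod : ModularLaw 1 m φ.toFun) (hweak : IsWeakC m φ.coeff)
    (hOG : IsOGC φ.coeff) :
    ∀ τ z : ℂ, 0 < τ.im → φ.toFun τ z = 0 := by
  have : NeZero m := ⟨hm.ne'⟩
  have hform := isOptimalGrowthForm_coeff hmod hOG
  have hmem : φ.coeff ∈ holomorphicForms m := ⟨hform, hform.isHolC⟩
  rw [holomorphicForms_eq_bot, Submodule.mem_bot] at hmem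
  intro τ z hτ
  rw [← fourierSeries_toFourierCoeff_coeff φ hτ z, hmem]
  simp [fourierSeries, toFourierCoeff]
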